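/- arXiv:2211.04506 — 12 statements merged into one kernel-verified Lean document; each statement's English description precedes it below -/
import Mathlib

section
/- Let n ≥ 3 be odd. Then the max cut space of K_n is all of ℝ^{C(n,2)}; in particular the max cut dimension of K_n equals C(n,2). -/
/-!
The function `S ↦ v_S` is quadratic: its second difference in the directions `x` and `y` is
`-2 e_{xy}`, where `e_{xy}` is the basis vector of the edge `{x, y}`. Subtracting the second
differences in the directions `a, x` and `a, y` at a `(k - 1)`-set cancels the sets of size `k - 1`
and expresses `e_{ax} - e_{ay}` through cut vectors of sets of size `k` and `k + 1` only, which are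
maximum cuts when `n = 2k + 1`. These differences generate the hyperplane of vectors with coordinate
sum zero, and a cut vector with a nonzero coordinate sum then completes it to the whole space.
-/

/-- Unordered pairs of distinct elements of `Fin n`, represented as ordered
pairs `(i, j)` with `i < j`; there are `n.choose 2` of them. -/
abbrev PairIdx (n : ℕ) := {p : Fin n × Fin n // p.1 < p.2}

/-- The cut indicator vector `v_S ∈ ℝ^{C(n,2)}`: the coordinate at the pair
`{i, j}` is `1` if exactly one of `i, j` lies in `S`, and `0` otherwise. -/
noncomputable def cutVec (n : ℕ) (S : Finset (Fin n)) : PairIdx n → ℝ :=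
  fun p => if (p.1.1 ∈ S ↔ p.1.2 ∈ S) then 0 else 1

/-- `S` is a maximum cut of the complete graph `K_n` (all edge weights `1`):
it maximizes `|S| * (n - |S|)`. -/
def IsMaxCut (n : ℕ) (S : Finset (Fin n)) : Prop :=
  ∀ T : Finset (Fin n), T.card * (n - T.card) ≤ S.card * (n - S.card)

section SingleDifferences

variable {ι R : Type*} [Fintype ι] [DecidableEq ι]

theorem mem_of_sum_eq_zero_of_single_sub_single_mem [Ring R] {W : Submodule R (ι → R)}
    (hW : ∀ i j, (Pi.single i 1 - Pi.single j 1 : ι → R) ∈ W) {v : ι → R} (hv : ∑ i, v i = 0) :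
    v ∈ W := by
  cases isEmpty_or_nonempty ι with
  | inl _ => simp [Subsingleton.elim v 0]
  | inr h =>
    obtain ⟨j⟩ := h
    have hsum : v = ∑ i, v i • (Pi.single i 1 - Pi.single j 1 : ι → R) := by
      simp only [smul_sub, Finset.sum_sub_distrib, ← Finset.sum_smul, hv, zero_smul, sub_zero]
      exact pi_eq_sum_univ' v
    rw [hsum]
    exact W.sum_mem fun i _ => W.smul_mem _ (hW i j)

theorem eq_top_of_single_sub_single_mem [DivisionRing R] {W : Submodule R (ι → R)}
    (hW : ∀ i j, (Pi.single i 1 - Pi.single j 1 : ι → R) ∈ W) {v : ι → R} (hv : v ∈ W)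
    (hsum : ∑ i, v i ≠ 0) : W = ⊤ := by
  refine W.eq_top_iff'.2 fun w => ?_
  set c : R := (∑ i, w i) * (∑ i, v i)⁻¹
  have hzero : ∑ i, (w - c • v) i = 0 := by
    simp [← Finset.mul_sum, c, hsum]
  exact (W.sub_mem_iff_left (W.smul_mem c hv)).1
    (mem_of_sum_eq_zero_of_single_sub_single_mem hW hzero)

end SingleDifferences

theorem card_pairIdx (n : ℕ) : Fintype.card (PairIdx n) = n.choose 2 := by
  rw [Fintype.card_subtype, Fintype.card_product_filter_lt, Fintype.card_fin]

theorem isMaxCut_of_card_balanced {n : ℕ} {S : Finset (Fin n)} (hlow : n ≤ 2 * S.card + 1)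
    (hhigh : 2 * S.card ≤ n + 1) : IsMaxCut n S := by
  intro T
  have hS : S.card ≤ n := by simpa using S.card_le_univ
  have hT : T.card ≤ n := by simpa using T.card_le_univ
  zify [hS, hT] at *
  -- `s (n - s) - t (n - t) = (s - t) (n - s - t)`, and balance keeps the factors from having
  -- opposite signs.
  suffices 0 ≤ ((S.card : ℤ) - T.card) * (n - S.card - T.card) by linarith
  rcases lt_trichotomy (T.card : ℤ) S.card with h | h | h
  · exact mul_nonneg (by lia) (by lia)
  · simp [h]
  · exact mul_nonneg_of_nonpos_of_nonpos (by lia) (by lia)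

section CutVec

variable {n : ℕ}

/-- The basis vector `e_{ij}` of `ℝ^{C(n,2)}` at the edge `{i, j}` of `K_n`. Unlike the ordered
index type `PairIdx n`, it is symmetric in its endpoints; it is `0` when `i = j`. -/
noncomputable def edgeVec (n : ℕ) (i j : Fin n) : PairIdx n → ℝ :=
  fun p => if s(p.1.1, p.1.2) = s(i, j) then 1 else 0

theorem edgeVec_comm (i j : Fin n) : edgeVec n i j = edgeVec n j i := by
  unfold edgeVec
  rw [Sym2.eq_swap]

theorem edgeVec_eq_single (p : PairIdx n) : edgeVec n p.1.1 p.1.2 = Pi.single p 1 := by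
  funext q
  have hiff : s(q.1.1, q.1.2) = s(p.1.1, p.1.2) ↔ q = p := by
    have := p.2
    have := q.2
    simp only [Sym2.eq_iff, Subtype.ext_iff, Prod.ext_iff]
    lia
  simp only [edgeVec, hiff, Pi.single_apply]

theorem cutVec_insert_add_cutVec_insert {x y : Fin n} {R : Finset (Fin n)} (hxy : x ≠ y)
    (hx : x ∉ R) (hy : y ∉ R) :
    cutVec n (insert x R) + cutVec n (insert y R) =
      cutVec n R + cutVec n (insert x (insert y R)) + (2 : ℝ) • edgeVec n x y := by
  -- An edge other than `{x, y}` meets `{x, y}` at most once, so its second difference vanishes.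
  funext ⟨⟨i, j⟩, hij⟩
  simp only [cutVec, edgeVec, Pi.add_apply, Pi.smul_apply, smul_eq_mul, Finset.mem_insert,
    Sym2.eq_iff]
  grind

theorem two_smul_edgeVec_sub_edgeVec {a x y : Fin n} {R : Finset (Fin n)} (hax : a ≠ x)
    (hay : a ≠ y) (ha : a ∉ R) (hx : x ∉ R) (hy : y ∉ R) :
    (2 : ℝ) • (edgeVec n a x - edgeVec n a y) =
      cutVec n (insert x R) - cutVec n (insert a (insert x R)) -
        (cutVec n (insert y R) - cutVec n (insert a (insert y R))) := by
  have h₁ := cutVec_insert_add_cutVec_insert hax ha hx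
  have h₂ := cutVec_insert_add_cutVec_insert hay ha hy
  rw [smul_sub]
  linear_combination h₂ - h₁

theorem sum_cutVec_pos {S : Finset (Fin n)} (hS : S.Nonempty) (hS' : S ≠ Finset.univ) :
    0 < ∑ p, cutVec n S p := by
  obtain ⟨i, hi⟩ := hS
  obtain ⟨j, hj⟩ : ∃ j, j ∉ S := by simpa [Finset.eq_univ_iff_forall] using hS'
  have hnonneg : ∀ p, 0 ≤ cutVec n S p := fun p => by unfold cutVec; split_ifs <;> norm_num
  obtain ⟨p, hp⟩ : ∃ p, cutVec n S p = 1 := by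
    rcases lt_or_gt_of_ne (ne_of_mem_of_not_mem hi hj) with h | h
    · exact ⟨⟨(i, j), h⟩, by simp [cutVec, hi, hj]⟩
    · exact ⟨⟨(j, i), h⟩, by simp [cutVec, hi, hj]⟩
  exact Finset.sum_pos' (fun p _ => hnonneg p) ⟨p, Finset.mem_univ p, by simp [hp]⟩

variable {k : ℕ} {W : Submodule ℝ (PairIdx n → ℝ)}

theorem edgeVec_sub_edgeVec_mem_of_common_left (hk : 0 < k) (hkn : k + 2 ≤ n)
    (hW : ∀ S : Finset (Fin n), S.card = k ∨ S.card = k + 1 → cutVec n S ∈ W)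
    {a x y : Fin n} (hax : a ≠ x) (hay : a ≠ y) : edgeVec n a x - edgeVec n a y ∈ W := by
  obtain ⟨R, hR, hRcard⟩ : ∃ R ⊆ ({a, x, y} : Finset (Fin n))ᶜ, R.card = k - 1 := by
    refine Finset.exists_subset_card_eq ?_
    have : ({a, x, y} : Finset (Fin n)).card ≤ 3 := Finset.card_le_three
    rw [Finset.card_compl, Fintype.card_fin]
    lia
  obtain ⟨ha, hx, hy⟩ : a ∉ R ∧ x ∉ R ∧ y ∉ R := by
    simpa [Finset.disjoint_right] using Finset.subset_compl_iff_disjoint_right.1 hR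
  have hmem : ∀ z, a ≠ z → z ∉ R →
      cutVec n (insert z R) - cutVec n (insert a (insert z R)) ∈ W := fun z haz hz => by
    have hcard : (insert z R).card = k := by rw [Finset.card_insert_of_notMem hz]; lia
    have hcard' : (insert a (insert z R)).card = k + 1 := by
      rw [Finset.card_insert_of_notMem (by simp [haz, ha]), hcard]
    exact W.sub_mem (hW _ (.inl hcard)) (hW _ (.inr hcard'))
  refine (W.smul_mem_iff (two_ne_zero (α := ℝ))).1 ?_
  rw [two_smul_edgeVec_sub_edgeVec hax hay ha hx hy]
  exact W.sub_mem (hmem x hax hx) (hmem y hay hy)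

theorem edgeVec_sub_edgeVec_mem
    (hW : ∀ a x y : Fin n, a ≠ x → a ≠ y → edgeVec n a x - edgeVec n a y ∈ W)
    {a b c d : Fin n} (hab : a ≠ b) (hcd : c ≠ d) : edgeVec n a b - edgeVec n c d ∈ W := by
  by_cases had : a = d
  · subst had
    rw [edgeVec_comm c a]
    exact hW a b c hab hcd.symm
  · have hleft := hW a b d hab had
    have hright := hW d a c (Ne.symm had) hcd.symm
    rw [edgeVec_comm d a, edgeVec_comm d c] at hright
    simpa using W.add_mem hleft hright

theorem eq_top_of_forall_cutVec_mem (hk : 0 < k) (hkn : k + 2 ≤ n)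
    (hW : ∀ S : Finset (Fin n), S.card = k ∨ S.card = k + 1 → cutVec n S ∈ W) : W = ⊤ := by
  have hsingle : ∀ p q, (Pi.single p 1 - Pi.single q 1 : PairIdx n → ℝ) ∈ W := fun p q => by
    rw [← edgeVec_eq_single, ← edgeVec_eq_single]
    exact edgeVec_sub_edgeVec_mem
      (fun _ _ _ => edgeVec_sub_edgeVec_mem_of_common_left hk hkn hW) p.2.ne q.2.ne
  obtain ⟨S, -, hS⟩ : ∃ S ⊆ (Finset.univ : Finset (Fin n)), S.card = k :=
    Finset.exists_subset_card_eq (by rw [Finset.card_fin]; lia)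
  have hne : S.Nonempty := Finset.card_pos.1 (by lia)
  have hne_univ : S ≠ Finset.univ := by
    rintro rfl
    rw [Finset.card_fin] at hS
    lia
  exact eq_top_of_single_sub_single_mem hsingle (hW S (.inl hS)) (sum_cutVec_pos hne hne_univ).ne'

end CutVec

/-- For odd `n ≥ 3`, the max cut space of `K_n` (the span of the indicator
vectors of the maximum cuts) is all of `ℝ^{C(n,2)}`; in particular the max
cut dimension of `K_n` equals `C(n,2)`. -/
theorem maxCutSpace_complete_odd (n : ℕ) (hn : 3 ≤ n) (hodd : Odd n) :
    Submodule.span ℝ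
        {v : PairIdx n → ℝ | ∃ S : Finset (Fin n), IsMaxCut n S ∧ v = cutVec n S} = ⊤ ∧
    Module.finrank ℝ
        ↥(Submodule.span ℝ
          {v : PairIdx n → ℝ | ∃ S : Finset (Fin n), IsMaxCut n S ∧ v = cutVec n S})
      = n.choose 2 := by
  obtain ⟨k, rfl⟩ := hodd
  have htop : Submodule.span ℝ {v : PairIdx (2 * k + 1) → ℝ |
      ∃ S : Finset (Fin (2 * k + 1)), IsMaxCut (2 * k + 1) S ∧ v = cutVec (2 * k + 1) S} = ⊤ :=
    eq_top_of_forall_cutVec_mem (k := k) (by lia) (by lia) fun S hS =>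
      Submodule.subset_span ⟨S, isMaxCut_of_card_balanced (by lia) (by lia), rfl⟩
  refine ⟨htop, ?_⟩
  rw [htop, finrank_top, Module.finrank_fintype_fun_eq_card, card_pairIdx]
end

section
/- Let n ∈ ℕ, let E be a set of unordered pairs of distinct elements of {1,…,n}, and let w : E → ℝ satisfy w_e > 0 for all e ∈ E. Let M(w) = max_{S ⊆ {1,…,n}} Σ_{e ∈ E} w_e·(v_S)_e (the max cut value of w), and let d be the dimension of the span in ℝ^E of {v_S : S ⊆ {1,…,n} with Σ_{e∈E} w_e·(v_S)_e = M(w)} (the max cut dimension). Then for every q ≤ d−1 and all subsets Q_1,…,Q_q ⊆ {1,…,n}, there exists w' : E → ℝ with w'_e > 0 for all e ∈ E, Σ_{e∈E} w'_e·(v_{Q_i})_e = Σ_{e∈E} w_e·(v_{Q_i})_e for every i ∈ {1,…,q}, and M(w') > M(w). -/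
/-- The cut indicator vector `v_S ∈ ℝ^E` for an edge set `E`: the coordinate at
an edge `e ∈ E` is `1` if exactly one endpoint of `e` lies in `S`, else `0`. -/
noncomputable def cutIndE (n : ℕ) (E : Finset (PairIdx n)) (S : Finset (Fin n)) : ↥E → ℝ :=
  fun e => if ((e : PairIdx n).1.1 ∈ S ↔ (e : PairIdx n).1.2 ∈ S) then 0 else 1

/-- The value `Σ_{e ∈ E} w_e (v_S)_e` of the cut `S` under weights `w`. -/
noncomputable def cutValE (n : ℕ) (E : Finset (PairIdx n)) (w : ↥E → ℝ)
    (S : Finset (Fin n)) : ℝ :=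
  ∑ e, w e * cutIndE n E S e

/-- The max cut value `M(w) = max_{S ⊆ {1,…,n}} Σ_{e ∈ E} w_e (v_S)_e`. -/
noncomputable def maxCutValE (n : ℕ) (E : Finset (PairIdx n)) (w : ↥E → ℝ) : ℝ :=
  Finset.univ.sup' Finset.univ_nonempty (cutValE n E w)

open scoped Topology

lemma exists_mem_notMem_span_of_finrank_lt {R M : Type*} [Semiring R] [StrongRankCondition R]
    [AddCommMonoid M] [Module R M] {s t : Set M} [Module.Finite R (Submodule.span R s)]
    (h : s.finrank R < t.finrank R) : ∃ v ∈ t, v ∉ Submodule.span R s :=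
  Set.not_subset.mp fun hts => h.not_ge (Submodule.finrank_mono (Submodule.span_le.mpr hts))

lemma exists_dotProduct_eq_one_of_notMem_span {K ι : Type*} [Field K] [Fintype ι]
    {s : Set (ι → K)} {v : ι → K} (hv : v ∉ Submodule.span K s) :
    ∃ z : ι → K, (∀ u ∈ s, z ⬝ᵥ u = 0) ∧ z ⬝ᵥ v = 1 := by
  classical
  obtain ⟨f, hfv, hf⟩ := Submodule.exists_le_ker_of_notMem hv
  obtain ⟨y, rfl⟩ := (dotProductEquiv K ι).surjective f
  refine ⟨(y ⬝ᵥ v)⁻¹ • y, fun u hu => ?_, ?_⟩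
  · have hyu : y ⬝ᵥ u = 0 := hf (Submodule.subset_span hu)
    rw [smul_dotProduct, hyu, smul_zero]
  · rw [smul_dotProduct, smul_eq_mul]
    exact inv_mul_cancel₀ hfv

lemma exists_pos_add_smul_mem {V : Type*} [TopologicalSpace V] [AddCommMonoid V] [Module ℝ V]
    [ContinuousAdd V] [ContinuousSMul ℝ V] {x : V} {U : Set V} (hU : U ∈ 𝓝 x) (z : V) :
    ∃ ε : ℝ, 0 < ε ∧ x + ε • z ∈ U := by
  have hcont : ContinuousAt (fun ε : ℝ => x + ε • z) 0 := by fun_prop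
  have hnear : ∀ᶠ ε : ℝ in 𝓝[>] 0, x + ε • z ∈ U :=
    (hcont.eventually_mem (by simpa using hU)).filter_mono nhdsWithin_le_nhds
  exact (eventually_mem_nhdsWithin.and hnear).exists

lemma exists_mem_dotProduct_eq_and_lt {ι : Type*} [Fintype ι] {w : ι → ℝ} {U : Set (ι → ℝ)}
    (hU : U ∈ 𝓝 w) {s : Set (ι → ℝ)} {v : ι → ℝ} (hv : v ∉ Submodule.span ℝ s) :
    ∃ w' ∈ U, (∀ u ∈ s, w' ⬝ᵥ u = w ⬝ᵥ u) ∧ w ⬝ᵥ v < w' ⬝ᵥ v := by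
  obtain ⟨z, hzs, hzv⟩ := exists_dotProduct_eq_one_of_notMem_span hv
  obtain ⟨ε, hε, hεU⟩ := exists_pos_add_smul_mem hU z
  have hshift (x : ι → ℝ) : (w + ε • z) ⬝ᵥ x = w ⬝ᵥ x + ε * (z ⬝ᵥ x) := by
    rw [add_dotProduct, smul_dotProduct, smul_eq_mul]
  refine ⟨w + ε • z, hεU, fun u hu => ?_, ?_⟩
  · rw [hshift, hzs u hu, mul_zero, add_zero]
  · rw [hshift, hzv, mul_one]
    exact lt_add_of_pos_right _ hε

section Cuts

variable {n : ℕ} {E : Finset (PairIdx n)}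

/-- The indicator vectors of the maximum cuts of `(E, w)`. The max cut dimension of `(E, w)` is
`(maxCutVectors n E w).finrank ℝ`. -/
def maxCutVectors (n : ℕ) (E : Finset (PairIdx n)) (w : ↥E → ℝ) : Set (↥E → ℝ) :=
  {v | ∃ S : Finset (Fin n), cutValE n E w S = maxCutValE n E w ∧ v = cutIndE n E S}

lemma cutValE_eq_dotProduct (w : ↥E → ℝ) (S : Finset (Fin n)) :
    cutValE n E w S = w ⬝ᵥ cutIndE n E S :=
  rfl

lemma cutValE_le_maxCutValE (w : ↥E → ℝ) (S : Finset (Fin n)) :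
    cutValE n E w S ≤ maxCutValE n E w :=
  Finset.le_sup' (cutValE n E w) (Finset.mem_univ S)

theorem cutDimension_lower_bound_general {w : ↥E → ℝ} {U : Set (↥E → ℝ)} (hU : U ∈ 𝓝 w)
    {ι : Type*} (Q : ι → Finset (Fin n))
    (hQ : (Set.range fun i => cutIndE n E (Q i)).finrank ℝ < (maxCutVectors n E w).finrank ℝ) :
    ∃ w' ∈ U, (∀ i, cutValE n E w' (Q i) = cutValE n E w (Q i)) ∧
      maxCutValE n E w < maxCutValE n E w' := by
  obtain ⟨_, ⟨S, hS, rfl⟩, hSQ⟩ := exists_mem_notMem_span_of_finrank_lt hQ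
  obtain ⟨w', hw'U, hw'Q, hw'S⟩ := exists_mem_dotProduct_eq_and_lt hU hSQ
  simp only [Set.forall_mem_range, ← cutValE_eq_dotProduct] at hw'Q hw'S
  refine ⟨w', hw'U, hw'Q, ?_⟩
  calc maxCutValE n E w = cutValE n E w S := hS.symm
    _ < cutValE n E w' S := hw'S
    _ ≤ maxCutValE n E w' := cutValE_le_maxCutValE w' S

end Cuts

/-- If `d` is the max cut dimension of the positively weighted graph `(E, w)`,
then for any `q ≤ d - 1` queried cuts `Q_1, …, Q_q` there is a positive weight
function `w'` agreeing with `w` on the value of every queried cut but whose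
max cut value is strictly larger. -/
theorem cutDimension_lower_bound (n : ℕ) (E : Finset (PairIdx n)) (w : ↥E → ℝ)
    (hw : ∀ e, 0 < w e) (q : ℕ)
    (hq : q < Module.finrank ℝ
        ↥(Submodule.span ℝ {v : ↥E → ℝ |
            ∃ S : Finset (Fin n), cutValE n E w S = maxCutValE n E w ∧ v = cutIndE n E S}))
    (Q : Fin q → Finset (Fin n)) :
    ∃ w' : ↥E → ℝ, (∀ e, 0 < w' e) ∧
      (∀ i : Fin q, cutValE n E w' (Q i) = cutValE n E w (Q i)) ∧
      maxCutValE n E w < maxCutValE n E w' := by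
  have hU : {w' : ↥E → ℝ | ∀ e, 0 < w' e} ∈ 𝓝 w :=
    Filter.eventually_all.mpr fun e => (continuousAt_apply e w).eventually_const_lt (hw e)
  exact cutDimension_lower_bound_general hU Q
    ((finrank_range_le_card _).trans_lt ((Fintype.card_fin q).trans_lt hq))
end

section
/- For every ε ∈ (0,1) and every α' with 0 < α' < (1−ε)³/(108(1+ε)) there exists N ∈ ℕ such that for all n ≥ N the following holds: if D is a linear subspace of ℝ^n with dim D ≤ α'·n, then there exists p ∈ {−1,1}^n such that ‖p − v‖₁ > ε·n for every v ∈ D, and |Σ_{i=1}^n p_i| ≤ 2·√(n·ln n). -/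
/-!
For a fixed centre `c`, the `ℓ1`-distance from `c` to a random sign vector has mean at least `n`,
so by Hoeffding's inequality at most `2 ^ n * exp (-(t ^ 2 / 2) * n)` sign vectors lie within
`(1 - t) n` of `c`. To pass from one centre to all of `D`, choose for each sign vector `p` that is
`ε n`-close to `D` a nearby point `v p ∈ D`. The balls of radius `δ n` in `D` around the `v p` lie
in a ball of radius `(1 + ε + δ) n`, and a point of `D` is in no more of them than there are sign
vectors within `(ε + δ) n` of it. Comparing volumes in `D`, at most
`((1 + ε + δ) / δ) ^ dim D * 2 ^ n * exp (-((1 - ε - δ) ^ 2 / 2) * n)` sign vectors are close to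
`D`. Again by Hoeffding's inequality, at most `2 ^ n * 2 / n ^ 2` sign vectors have
`|∑ p i| ≥ 2 √(n log n)`, so if the other bound is exponentially smaller than `2 ^ n`, then for
large `n` some sign vector is in neither set. The slack `δ = (1 - ε) / 3` achieves this for
`dim D ≤ α n` with `α < (1 - ε) ^ 3 / (108 (1 + ε))`, because `log (1 + x) ≤ x`.
-/

open MeasureTheory Metric Module Real Filter
open scoped ENNReal Finset

section Packing

lemma sum_measure_le_mul_measure_of_card_le {α κ : Type*} [MeasurableSpace α] (μ : Measure α)
    (S : Finset κ) {s : κ → Set α} {t : Set α} [∀ x, DecidablePred fun i => x ∈ s i] {M : ℝ≥0∞}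
    (hs : ∀ i ∈ S, MeasurableSet (s i)) (ht : MeasurableSet t) (hst : ∀ i ∈ S, s i ⊆ t)
    (hM : ∀ x ∈ t, (#{i ∈ S | x ∈ s i} : ℝ≥0∞) ≤ M) :
    ∑ i ∈ S, μ (s i) ≤ M * μ t := by
  have count_le (x : α) : ∑ i ∈ S, (s i).indicator 1 x ≤ t.indicator (fun _ => M) x := by
    by_cases hx : x ∈ t
    · simpa [hx, Set.indicator_apply, Finset.sum_boole] using hM x hx
    · exact (Finset.sum_eq_zero fun i hi =>
        Set.indicator_of_notMem (fun hxi => hx (hst i hi hxi)) _).trans_le zero_le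
  calc ∑ i ∈ S, μ (s i)
      = ∑ i ∈ S, ∫⁻ x, (s i).indicator 1 x ∂μ :=
        Finset.sum_congr rfl fun i hi => (lintegral_indicator_one (hs i hi)).symm
    _ = ∫⁻ x, ∑ i ∈ S, (s i).indicator 1 x ∂μ :=
        (lintegral_finsetSum' _ fun i hi =>
          (measurable_one.indicator (hs i hi)).aemeasurable).symm
    _ ≤ ∫⁻ x, t.indicator (fun _ => M) x ∂μ := lintegral_mono count_le
    _ = M * μ t := lintegral_indicator_const ht M

variable {E κ : Type*} [NormedAddCommGroup E] [NormedSpace ℝ E]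

lemma card_le_of_card_closedBall_overlap_le [FiniteDimensional ℝ E] (S : Finset κ) (v : κ → E)
    (c : E) {R r M : ℝ} (hR : 0 ≤ R) (hr : 0 < r) (hv : ∀ i ∈ S, v i ∈ closedBall c R)
    (hM : ∀ x, (#{i ∈ S | dist x (v i) ≤ r} : ℝ) ≤ M) :
    (#S : ℝ) ≤ ((R + r) / r) ^ finrank ℝ E * M := by
  classical
  let _ : MeasurableSpace E := borel E
  have : BorelSpace E := ⟨rfl⟩
  let μ : Measure E := Measure.addHaar
  let β := μ.real (closedBall (0 : E) 1)
  have hM0 : 0 ≤ M := (Nat.cast_nonneg _).trans (hM 0)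
  have hβ : 0 < β :=
    ENNReal.toReal_pos (measure_closedBall_pos μ _ one_pos).ne' measure_closedBall_lt_top.ne
  have volume_le : ∑ i ∈ S, μ (closedBall (v i) r) ≤
      ENNReal.ofReal M * μ (closedBall c (R + r)) := by
    refine sum_measure_le_mul_measure_of_card_le μ S (fun _ _ => measurableSet_closedBall)
      measurableSet_closedBall (fun i hi => closedBall_subset_closedBall' ?_) fun x _ => ?_
    · linarith [mem_closedBall.1 (hv i hi)]
    · rw [← ENNReal.ofReal_natCast]
      exact ENNReal.ofReal_le_ofReal (by simpa only [mem_closedBall] using hM x)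
  have real_volume_le : #S * (r ^ finrank ℝ E * β) ≤ M * ((R + r) ^ finrank ℝ E * β) := by
    have := ENNReal.toReal_mono
      (ENNReal.mul_ne_top ENNReal.ofReal_ne_top measure_closedBall_lt_top.ne) volume_le
    simp only [Measure.addHaar_closedBall' μ _ hr.le,
      Measure.addHaar_closedBall' μ _ (add_nonneg hR hr.le), Finset.sum_const, nsmul_eq_mul,
      ENNReal.toReal_mul, ENNReal.toReal_natCast, ENNReal.toReal_ofReal hM0,
      ENNReal.toReal_ofReal (pow_nonneg hr.le _),
      ENNReal.toReal_ofReal (pow_nonneg (add_nonneg hR hr.le) _)] at this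
    exact this
  rw [div_pow, div_mul_eq_mul_div, le_div_iff₀ (by positivity)]
  refine le_of_mul_le_mul_right ?_ hβ
  linarith

lemma card_le_of_forall_exists_mem_submodule_near (D : Submodule ℝ E) [FiniteDimensional ℝ D]
    (S : Finset κ) (P : κ → E) {ρ a r M : ℝ} (hρa : 0 ≤ ρ + a) (hr : 0 < r)
    (hρ : ∀ i ∈ S, ‖P i‖ ≤ ρ) (hnear : ∀ i ∈ S, ∃ v ∈ D, dist (P i) v ≤ a)
    (hM : ∀ x ∈ D, (#{i ∈ S | dist (P i) x ≤ a + r} : ℝ) ≤ M) :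
    (#S : ℝ) ≤ ((ρ + a + r) / r) ^ finrank ℝ D * M := by
  have exists_near (i : κ) : ∃ v : D, i ∈ S → dist (P i) v ≤ a := by
    by_cases hi : i ∈ S
    · obtain ⟨v, hvD, hv⟩ := hnear i hi
      exact ⟨⟨v, hvD⟩, fun _ => hv⟩
    · exact ⟨0, fun h => absurd h hi⟩
  choose v hv using exists_near
  refine card_le_of_card_closedBall_overlap_le S v 0 hρa hr (fun i hi => ?_) fun x => ?_
  · rw [mem_closedBall_zero_iff, Submodule.coe_norm]
    linarith [norm_le_norm_add_norm_sub (P i) (v i : E), hρ i hi, hv i hi,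
      dist_eq_norm (P i) (v i : E)]
  · refine (Nat.cast_le.2 (Finset.card_le_card fun i hi => ?_)).trans (hM x x.2)
    rw [Finset.mem_filter] at hi ⊢
    have hx : dist (v i : E) x ≤ r := dist_comm (x : E) (v i) ▸ hi.2
    exact ⟨hi.1, (dist_triangle _ _ _).trans (add_le_add (hv i hi.1) hx)⟩

end Packing

section SignVectors

lemma exp_add_exp_le (u v : ℝ) :
    exp u + exp v ≤ 2 * exp ((u + v) / 2 + ((u - v) / 2) ^ 2 / 2) := by
  calc exp u + exp v = exp ((u + v) / 2) * (2 * cosh ((u - v) / 2)) := by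
        rw [cosh_eq, mul_div_cancel₀ _ two_ne_zero, mul_add, ← exp_add, ← exp_add]
        ring_nf
    _ ≤ exp ((u + v) / 2) * (2 * exp (((u - v) / 2) ^ 2 / 2)) := by
        gcongr
        exact cosh_le_exp_half_sq _
    _ = 2 * exp ((u + v) / 2 + ((u - v) / 2) ^ 2 / 2) := by rw [exp_add]; ring

variable {ι : Type*} [Fintype ι] [DecidableEq ι]

variable (ι) in
/-- The vertices of the cube `[-1, 1] ^ ι`, i.e. the sign vectors, as a finite set of real vectors;
probabilities of events about a random sign vector are expressed by counting in this set. -/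
noncomputable def signVectors : Finset (ι → ℝ) :=
  Fintype.piFinset fun _ => {1, -1}

lemma mem_signVectors {p : ι → ℝ} : p ∈ signVectors ι ↔ ∀ i, p i = 1 ∨ p i = -1 := by
  simp [signVectors]

variable (ι) in
lemma card_signVectors : #(signVectors ι) = 2 ^ Fintype.card ι := by
  simp [signVectors, Finset.card_pair (show (1 : ℝ) ≠ -1 by norm_num)]

lemma sum_signVectors_prod (g : ι → ℝ → ℝ) :
    ∑ p ∈ signVectors ι, ∏ i, g i (p i) = ∏ i, (g i 1 + g i (-1)) := by
  simp only [signVectors, ← Finset.prod_univ_sum,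
    Finset.sum_pair (show (1 : ℝ) ≠ -1 by norm_num)]

lemma sum_signVectors_exp_sum_le (f : ι → ℝ → ℝ) {a : ℝ}
    (hf : ∀ i, exp (f i 1) + exp (f i (-1)) ≤ 2 * exp a) :
    ∑ p ∈ signVectors ι, exp (∑ i, f i (p i)) ≤
      2 ^ Fintype.card ι * exp (Fintype.card ι * a) := by
  calc ∑ p ∈ signVectors ι, exp (∑ i, f i (p i))
      = ∏ i, (exp (f i 1) + exp (f i (-1))) := by
        simp only [exp_sum, sum_signVectors_prod fun i x => exp (f i x)]
    _ ≤ ∏ _i : ι, 2 * exp a := Finset.prod_le_prod (fun i _ => by positivity) fun i _ => hf i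
    _ = 2 ^ Fintype.card ι * exp (Fintype.card ι * a) := by
        rw [Finset.prod_const, Finset.card_univ, mul_pow, exp_nat_mul]

lemma hoeffding_card_signVectors_sum_le (f : ι → ℝ → ℝ) {m t : ℝ} (ht : 0 ≤ t)
    (hmean : ∀ i, 2 * m ≤ f i 1 + f i (-1)) (hosc : ∀ i, |f i 1 - f i (-1)| ≤ 2) :
    (#{p ∈ signVectors ι | ∑ i, f i (p i) ≤ (m - t) * Fintype.card ι} : ℝ) ≤
      2 ^ Fintype.card ι * exp (-(t ^ 2 / 2) * Fintype.card ι) := by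
  have moment_le (i : ι) : exp (t * (m - f i 1)) + exp (t * (m - f i (-1))) ≤
      2 * exp (t ^ 2 / 2) := by
    refine (exp_add_exp_le _ _).trans ?_
    have hsq : (f i 1 - f i (-1)) ^ 2 ≤ 2 ^ 2 :=
      sq_le_sq' (abs_le.1 (hosc i)).1 (abs_le.1 (hosc i)).2
    gcongr
    nlinarith [mul_nonneg ht (sub_nonneg.2 (hmean i)), mul_le_mul_of_nonneg_left hsq (sq_nonneg t)]
  have exp_le_of_mem : ∀ p ∈ ({p ∈ signVectors ι | ∑ i, f i (p i) ≤ (m - t) * Fintype.card ι} :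
      Finset (ι → ℝ)), exp (t ^ 2 * Fintype.card ι) ≤ exp (∑ i, t * (m - f i (p i))) := by
    intro p hp
    rw [exp_le_exp, ← Finset.mul_sum, Finset.sum_sub_distrib, Finset.sum_const, Finset.card_univ,
      nsmul_eq_mul]
    nlinarith [mul_le_mul_of_nonneg_left (Finset.mem_filter.1 hp).2 ht]
  have markov : #{p ∈ signVectors ι | ∑ i, f i (p i) ≤ (m - t) * Fintype.card ι} *
      exp (t ^ 2 * Fintype.card ι) ≤ 2 ^ Fintype.card ι * exp (Fintype.card ι * (t ^ 2 / 2)) := by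
    rw [← nsmul_eq_mul]
    exact (Finset.card_nsmul_le_sum _ _ _ exp_le_of_mem).trans <|
      (Finset.sum_le_sum_of_subset_of_nonneg (Finset.filter_subset _ _) fun _ _ _ =>
        (exp_pos _).le).trans <| sum_signVectors_exp_sum_le (fun i x => t * (m - f i x)) moment_le
  refine (le_div_iff₀ (exp_pos _)).2 markov |>.trans_eq ?_
  rw [mul_div_assoc, ← exp_sub]
  ring_nf

lemma card_signVectors_l1_dist_le_le (c : ι → ℝ) {t : ℝ} (ht : 0 ≤ t) :
    (#{p ∈ signVectors ι | ∑ i, |p i - c i| ≤ (1 - t) * Fintype.card ι} : ℝ) ≤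
      2 ^ Fintype.card ι * exp (-(t ^ 2 / 2) * Fintype.card ι) := by
  refine hoeffding_card_signVectors_sum_le (fun i x => |x - c i|) ht (fun i => ?_) fun i => ?_
  · calc (2 * 1 : ℝ) = |(1 - c i) - (-1 - c i)| := by norm_num
      _ ≤ |1 - c i| + |-1 - c i| := abs_sub _ _
  · calc |(|1 - c i| - |-1 - c i|)| ≤ |(1 - c i) - (-1 - c i)| := abs_abs_sub_abs_le _ _
      _ = 2 := by norm_num

lemma card_signVectors_le_abs_sum_le [Nonempty ι] {s : ℝ} (hs : 0 ≤ s) :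
    (#{p ∈ signVectors ι | s ≤ |∑ i, p i|} : ℝ) ≤
      2 ^ Fintype.card ι * (2 * exp (-(s ^ 2 / (2 * Fintype.card ι)))) := by
  have : (0 : ℝ) < Fintype.card ι := Nat.cast_pos.2 Fintype.card_pos
  have tail_le {σ : ℝ} (hσ : |σ| = 1) : (#{p ∈ signVectors ι | ∑ i, σ * p i ≤ -s} : ℝ) ≤
      2 ^ Fintype.card ι * exp (-(s ^ 2 / (2 * Fintype.card ι))) := by
    convert hoeffding_card_signVectors_sum_le (ι := ι) (fun _ x => σ * x) (m := 0)
      (t := s / Fintype.card ι) (by positivity) (by simp) (fun _ => ?_) using 5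
    · field_simp
      ring
    · field_simp
    · rw [← mul_sub, abs_mul, hσ]
      norm_num
  have subset_union : ({p ∈ signVectors ι | s ≤ |∑ i, p i|} : Finset (ι → ℝ)) ⊆
      {p ∈ signVectors ι | ∑ i, 1 * p i ≤ -s} ∪ {p ∈ signVectors ι | ∑ i, -1 * p i ≤ -s} := by
    intro p hp
    simp only [Finset.mem_union, Finset.mem_filter, ← Finset.mul_sum, le_abs] at hp ⊢
    grind
  calc (#{p ∈ signVectors ι | s ≤ |∑ i, p i|} : ℝ)
      ≤ #{p ∈ signVectors ι | ∑ i, 1 * p i ≤ -s} + #{p ∈ signVectors ι | ∑ i, -1 * p i ≤ -s} := by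
        exact_mod_cast (Finset.card_le_card subset_union).trans (Finset.card_union_le _ _)
    _ ≤ _ := add_le_add (tail_le (by simp)) (tail_le (by simp))
    _ = 2 ^ Fintype.card ι * (2 * exp (-(s ^ 2 / (2 * Fintype.card ι)))) := by ring

open scoped Classical in
lemma card_signVectors_near_submodule_le [Nonempty ι] (D : Submodule ℝ (ι → ℝ)) {ε δ : ℝ}
    (hε : 0 ≤ ε) (hδ : 0 < δ) (hεδ : ε + δ ≤ 1) :
    (#{p ∈ signVectors ι | ∃ v ∈ D, ∑ i, |p i - v i| ≤ ε * Fintype.card ι} : ℝ) ≤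
      2 ^ Fintype.card ι * (((1 + ε + δ) / δ) ^ finrank ℝ D *
        exp (-((1 - ε - δ) ^ 2 / 2) * Fintype.card ι)) := by
  have : (0 : ℝ) < Fintype.card ι := Nat.cast_pos.2 Fintype.card_pos
  let toL1 := (WithLp.linearEquiv 1 ℝ (ι → ℝ)).symm
  have dist_toL1 (p q : ι → ℝ) : dist (toL1 p) (toL1 q) = ∑ i, |p i - q i| := by
    simp [toL1, dist_eq_norm, PiLp.norm_eq_of_L1]
  have packing := card_le_of_forall_exists_mem_submodule_near (D.map toL1.toLinearMap)
    {p ∈ signVectors ι | ∃ v ∈ D, ∑ i, |p i - v i| ≤ ε * Fintype.card ι} toL1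
    (ρ := Fintype.card ι) (a := ε * Fintype.card ι) (r := δ * Fintype.card ι)
    (M := 2 ^ Fintype.card ι * exp (-((1 - ε - δ) ^ 2 / 2) * Fintype.card ι))
    (by positivity) (by positivity) (fun p hp => ?_) (fun p hp => ?_) ?_
  · have ratio_eq : (Fintype.card ι + ε * Fintype.card ι + δ * Fintype.card ι) /
        (δ * Fintype.card ι) = (1 + ε + δ) / δ := by field_simp
    rw [ratio_eq, LinearEquiv.finrank_map_eq] at packing
    linarith
  · have abs_eq_one (i : ι) : |p i| = 1 :=
      abs_eq zero_le_one |>.2 (mem_signVectors.1 (Finset.mem_filter.1 hp).1 i)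
    simpa [abs_eq_one] using (dist_toL1 p 0).le
  · obtain ⟨v, hvD, hv⟩ := (Finset.mem_filter.1 hp).2
    exact ⟨toL1 v, Submodule.mem_map_of_mem hvD, (dist_toL1 p v).trans_le hv⟩
  · rintro _ ⟨c, -, rfl⟩
    refine (Nat.cast_le.2 (Finset.card_le_card fun p hp => ?_)).trans
      (card_signVectors_l1_dist_le_le c (t := 1 - ε - δ) (by linarith))
    simp only [Finset.mem_filter, LinearEquiv.coe_coe, dist_toL1] at hp ⊢
    exact ⟨hp.1.1, hp.2.trans_eq (by ring)⟩

lemma exists_signVector_far_and_abs_sum_lt [Nonempty ι] (D : Submodule ℝ (ι → ℝ)) {ε δ s : ℝ}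
    (hε : 0 ≤ ε) (hδ : 0 < δ) (hεδ : ε + δ ≤ 1) (hs : 0 ≤ s)
    (h : ((1 + ε + δ) / δ) ^ finrank ℝ D * exp (-((1 - ε - δ) ^ 2 / 2) * Fintype.card ι) +
      2 * exp (-(s ^ 2 / (2 * Fintype.card ι))) < 1) :
    ∃ p ∈ signVectors ι, (∀ v ∈ D, ε * Fintype.card ι < ∑ i, |p i - v i|) ∧ |∑ i, p i| < s := by
  classical
  let near : Finset (ι → ℝ) :=
    {p ∈ signVectors ι | ∃ v ∈ D, ∑ i, |p i - v i| ≤ ε * Fintype.card ι}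
  let unbalanced : Finset (ι → ℝ) := {p ∈ signVectors ι | s ≤ |∑ i, p i|}
  have card_lt : #(near ∪ unbalanced) < #(signVectors ι) := by
    rify
    calc (#(near ∪ unbalanced) : ℝ) ≤ #near + #unbalanced :=
          mod_cast Finset.card_union_le near unbalanced
      _ ≤ _ := add_le_add (card_signVectors_near_submodule_le D hε hδ hεδ)
          (card_signVectors_le_abs_sum_le hs)
      _ < 2 ^ Fintype.card ι * 1 := by rw [← mul_add]; gcongr
      _ = #(signVectors ι) := by rw [card_signVectors]; norm_num
  obtain ⟨p, hp, hgood⟩ := Finset.exists_mem_notMem_of_card_lt_card card_lt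
  simp only [near, unbalanced, Finset.mem_union, Finset.mem_filter, hp, true_and, not_or,
    not_exists, not_and, not_le] at hgood
  exact ⟨p, hp, hgood⟩

end SignVectors

section Asymptotics

lemma pow_mul_exp_neg_le_exp {b α κ x : ℝ} {k : ℕ} (hb : 1 ≤ b) (hk : k ≤ α * x) :
    b ^ k * exp (-κ * x) ≤ exp (-(κ - α * log b) * x) := by
  rw [← exp_log (pow_pos (one_pos.trans_le hb) k), log_pow, ← exp_add, exp_le_exp]
  linarith [mul_le_mul_of_nonneg_right hk (log_nonneg hb)]

lemma exp_neg_sq_two_mul_sqrt_mul_log {n : ℕ} (hn : 0 < n) :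
    exp (-((2 * √(n * log n)) ^ 2 / (2 * n))) = 1 / (n : ℝ) ^ 2 := by
  have hn' : (0 : ℝ) < n := Nat.cast_pos.2 hn
  have exponent_eq : (2 * √(n * log n)) ^ 2 / (2 * n) = (2 : ℕ) * log n := by
    rw [mul_pow, sq_sqrt (mul_nonneg hn'.le (log_natCast_nonneg n))]
    push_cast
    field_simp
  rw [exponent_eq, exp_neg, exp_nat_mul, exp_log hn', one_div]

lemma eventually_exp_neg_mul_add_two_div_sq_lt_one {κ : ℝ} (hκ : 0 < κ) :
    ∀ᶠ n : ℕ in atTop, exp (-κ * n) + 2 * (1 / (n : ℝ) ^ 2) < 1 := by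
  have exp_tendsto : Tendsto (fun n : ℕ => exp (-κ * n)) atTop (nhds 0) :=
    tendsto_exp_atBot.comp <| tendsto_natCast_atTop_atTop.const_mul_atTop_of_neg (neg_neg_of_pos hκ)
  have sq_tendsto : Tendsto (fun n : ℕ => 1 / (n : ℝ) ^ 2) atTop (nhds 0) :=
    tendsto_const_nhds.div_atTop <| (tendsto_pow_atTop two_ne_zero).comp tendsto_natCast_atTop_atTop
  exact (exp_tendsto.add (sq_tendsto.const_mul 2)).eventually_lt_const (by norm_num)

end Asymptotics

theorem hypercube_not_covered_general {ε δ α : ℝ} (hε : 0 ≤ ε) (hδ : 0 < δ) (hεδ : ε + δ ≤ 1)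
    (hα : α * log ((1 + ε + δ) / δ) < (1 - ε - δ) ^ 2 / 2) :
    ∃ N : ℕ, ∀ (ι : Type*) [Fintype ι], N ≤ Fintype.card ι → ∀ D : Submodule ℝ (ι → ℝ),
      finrank ℝ D ≤ α * Fintype.card ι →
      ∃ p : ι → ℝ, (∀ i, p i = 1 ∨ p i = -1) ∧
        (∀ v ∈ D, ε * Fintype.card ι < ∑ i, |p i - v i|) ∧
        |∑ i, p i| ≤ 2 * √(Fintype.card ι * log (Fintype.card ι)) := by
  classical
  obtain ⟨N, hN⟩ := eventually_atTop.1 <|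
    (eventually_exp_neg_mul_add_two_div_sq_lt_one (sub_pos.2 hα)).and (eventually_gt_atTop 0)
  refine ⟨N, fun ι _ hι D hD => ?_⟩
  obtain ⟨small, card_pos⟩ := hN _ hι
  have : Nonempty ι := Fintype.card_pos_iff.1 card_pos
  have one_le_ratio : 1 ≤ (1 + ε + δ) / δ := (one_le_div hδ).2 (by linarith)
  obtain ⟨p, hp, far, balanced⟩ := exists_signVector_far_and_abs_sum_lt D hε hδ hεδ
    (s := 2 * √(Fintype.card ι * log (Fintype.card ι))) (by positivity) <| by
      rw [exp_neg_sq_two_mul_sqrt_mul_log card_pos]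
      exact (add_le_add_left (pow_mul_exp_neg_le_exp one_le_ratio hD) _).trans_lt small
  exact ⟨p, mem_signVectors.1 hp, far, balanced.le⟩

lemma mul_log_ratio_lt {ε α : ℝ} (hε : ε ∈ Set.Ioo (0 : ℝ) 1)
    (hα : α < (1 - ε) ^ 3 / (108 * (1 + ε))) :
    α * log ((1 + ε + (1 - ε) / 3) / ((1 - ε) / 3)) < (1 - ε - (1 - ε) / 3) ^ 2 / 2 := by
  obtain ⟨hε0, hε1⟩ := hε
  have hη : 0 < 1 - ε := sub_pos.2 hε1
  have ratio_eq : (1 + ε + (1 - ε) / 3) / ((1 - ε) / 3) = 1 + 3 * (1 + ε) / (1 - ε) := by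
    field_simp
    ring
  have ratio_pos : 0 < 3 * (1 + ε) / (1 - ε) := by positivity
  rw [ratio_eq]
  calc α * log (1 + 3 * (1 + ε) / (1 - ε))
      ≤ (1 - ε) ^ 3 / (108 * (1 + ε)) * log (1 + 3 * (1 + ε) / (1 - ε)) :=
        mul_le_mul_of_nonneg_right hα.le (log_nonneg (by linarith))
    _ ≤ (1 - ε) ^ 3 / (108 * (1 + ε)) * (3 * (1 + ε) / (1 - ε)) := by
        gcongr
        linarith [log_le_sub_one_of_pos (add_pos one_pos ratio_pos)]
    _ = (1 - ε) ^ 2 / 36 := by field_simp; norm_num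
    _ < (1 - ε - (1 - ε) / 3) ^ 2 / 2 := by linarith [pow_pos hη 2]

/-- The hypercube cannot be covered by an ℓ1-neighborhood of a low-dimensional
subspace: for `ε ∈ (0,1)` and `0 < α' < (1-ε)³/(108(1+ε))`, for all
sufficiently large `n`, any subspace `D ⊆ ℝⁿ` of dimension at most `α'·n`
misses some sign vector `p ∈ {-1,1}ⁿ` by ℓ1-distance more than `ε·n`, where
moreover `|Σᵢ pᵢ| ≤ 2√(n ln n)`. -/
theorem hypercube_not_covered (ε α' : ℝ) (hε : ε ∈ Set.Ioo (0 : ℝ) 1)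
    (hα0 : 0 < α') (hα : α' < (1 - ε) ^ 3 / (108 * (1 + ε))) :
    ∃ N : ℕ, ∀ n : ℕ, N ≤ n → ∀ D : Submodule ℝ (Fin n → ℝ),
      (Module.finrank ℝ ↥D : ℝ) ≤ α' * n →
      ∃ p : Fin n → ℝ, (∀ i, p i = 1 ∨ p i = -1) ∧
        (∀ v ∈ D, ε * n < ∑ i, |p i - v i|) ∧
        |∑ i, p i| ≤ 2 * Real.sqrt (n * Real.log n) := by
  obtain ⟨N, hN⟩ := hypercube_not_covered_general hε.1.le
    (div_pos (sub_pos.2 hε.2) three_pos) (by linarith [hε.2]) (mul_log_ratio_lt hε hα)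
  exact ⟨N, fun n hn => by simpa using hN (Fin n) (by simpa using hn)⟩
end

section
/- Let n ≥ 1, let t ∈ [0,1), and let x ∈ ℝ^n. Then the number of p ∈ {−1,1}^n with ‖p − x‖₁ ≤ t·n is at most 2^n · exp(−n·(1−t)²/2). -/
/-!
Chernoff's method: for `s ≥ 0`, bound the indicator of `∑ dist (p i) (x i) ≤ r` by
`exp (s r - s ∑ dist (p i) (x i))` and sum over all `p`; the sum factors over the coordinates.
In one coordinate with the two choices `a` and `b`, the distances `u = dist a y` and `v = dist b y`
satisfy `u + v ≥ dist a b` and `|u - v| ≤ dist a b` by the triangle inequality, so that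
`cosh z ≤ exp (z² / 2)` bounds `exp (-s u) + exp (-s v)` independently of `y`.
-/

open Finset Real

lemma card_filter_le_exp_mul_sum_exp {α : Type*} (S : Finset α) (f : α → ℝ) (r : ℝ) {s : ℝ}
    (hs : 0 ≤ s) :
    (#{p ∈ S | f p ≤ r} : ℝ) ≤ exp (s * r) * ∑ p ∈ S, exp (-(s * f p)) := by
  rw [card_filter, Nat.cast_sum, mul_sum]
  refine sum_le_sum fun p _ => ?_
  rw [← exp_add]
  split_ifs with hp
  · rw [Nat.cast_one]
    exact one_le_exp (by linarith [mul_le_mul_of_nonneg_left hp hs])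
  · rw [Nat.cast_zero]
    exact (exp_pos _).le

lemma sum_piFinset_exp_neg_mul_sum {ι : Type*} [Fintype ι] [DecidableEq ι] {X : ι → Type*}
    (A : ∀ i, Finset (X i)) (f : ∀ i, X i → ℝ) (s : ℝ) :
    ∑ p ∈ Fintype.piFinset A, exp (-(s * ∑ i, f i (p i))) =
      ∏ i, ∑ y ∈ A i, exp (-(s * f i y)) := by
  simp only [prod_univ_sum, ← exp_sum, sum_neg_distrib, mul_sum]

lemma exp_add_exp_eq_two_mul_exp_mul_cosh (u v : ℝ) :
    exp u + exp v = 2 * (exp ((u + v) / 2) * cosh ((u - v) / 2)) := by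
  rw [cosh_eq, mul_div_assoc', mul_add, ← exp_add, ← exp_add,
    show (u + v) / 2 + (u - v) / 2 = u by ring, show (u + v) / 2 + -((u - v) / 2) = v by ring]
  ring

lemma exp_add_exp_le_two_mul_exp (u v : ℝ) :
    exp u + exp v ≤ 2 * exp ((u + v) / 2 + (u - v) ^ 2 / 8) := by
  have hcosh : cosh ((u - v) / 2) ≤ exp ((u - v) ^ 2 / 8) :=
    (cosh_le_exp_half_sq _).trans_eq (by ring_nf)
  rw [exp_add_exp_eq_two_mul_exp_mul_cosh, exp_add]
  gcongr

lemma exp_neg_mul_dist_add_exp_neg_mul_dist_le {X : Type*} [PseudoMetricSpace X] (a b y : X) {s : ℝ}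
    (hs : 0 ≤ s) :
    exp (-(s * dist a y)) + exp (-(s * dist b y)) ≤
      2 * exp (-(s * dist a b / 2) + (s * dist a b) ^ 2 / 8) := by
  have hsum : s * dist a b ≤ s * dist a y + s * dist b y := by
    rw [← mul_add]
    exact mul_le_mul_of_nonneg_left (dist_triangle_right a b y) hs
  have hdiff : (-(s * dist a y) - -(s * dist b y)) ^ 2 ≤ (s * dist a b) ^ 2 := by
    rw [show -(s * dist a y) - -(s * dist b y) = -(s * (dist a y - dist b y)) by ring, neg_sq,
      mul_pow, mul_pow]
    gcongr ?_ * ?_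
    exact sq_le_sq' (neg_le_of_abs_le (abs_dist_sub_le a b y))
      (le_of_abs_le (abs_dist_sub_le a b y))
  refine (exp_add_exp_le_two_mul_exp _ _).trans ?_
  gcongr 2 * exp (?_ + ?_ / 8)
  linarith

lemma sum_pair_le {α M : Type*} [DecidableEq α] [AddCommMonoid M] [Preorder M] [AddLeftMono M]
    (f : α → M) (a : α) {b : α} (hb : 0 ≤ f b) :
    ∑ y ∈ {a, b}, f y ≤ f a + f b := by
  obtain rfl | hab := eq_or_ne a b
  · rw [pair_eq_singleton, sum_singleton]
    exact le_add_of_nonneg_right hb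
  · exact (sum_pair hab).le

lemma card_pi_pair_sum_dist_le {ι : Type*} [Fintype ι] {X : ι → Type*}
    [∀ i, PseudoMetricSpace (X i)] (a b x : ∀ i, X i) (r : ℝ) {s : ℝ} (hs : 0 ≤ s) :
    (Nat.card {p : ∀ i, X i | (∀ i, p i = a i ∨ p i = b i) ∧ ∑ i, dist (p i) (x i) ≤ r} : ℝ) ≤
      2 ^ Fintype.card ι * exp (s * r - s * (∑ i, dist (a i) (b i)) / 2 +
        s ^ 2 * (∑ i, dist (a i) (b i) ^ 2) / 8) := by
  classical
  let P := Fintype.piFinset fun i => ({a i, b i} : Finset (X i))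
  have hcard : Nat.card {p : ∀ i, X i |
        (∀ i, p i = a i ∨ p i = b i) ∧ ∑ i, dist (p i) (x i) ≤ r} =
      #{p ∈ P | ∑ i, dist (p i) (x i) ≤ r} :=
    Nat.subtype_card _ fun p => by simp [P]
  calc _ = (#{p ∈ P | ∑ i, dist (p i) (x i) ≤ r} : ℝ) := by rw [hcard]
    _ ≤ exp (s * r) * ∑ p ∈ P, exp (-(s * ∑ i, dist (p i) (x i))) :=
        card_filter_le_exp_mul_sum_exp P _ r hs
    _ = exp (s * r) * ∏ i, ∑ y ∈ {a i, b i}, exp (-(s * dist y (x i))) := by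
        rw [sum_piFinset_exp_neg_mul_sum _ fun i y => dist y (x i)]
    _ ≤ exp (s * r) *
          ∏ i, (2 * exp (-(s * dist (a i) (b i) / 2) + (s * dist (a i) (b i)) ^ 2 / 8)) := by
        gcongr with i
        exact (sum_pair_le (fun y => exp (-(s * dist y (x i)))) (a i) (exp_pos _).le).trans
          (exp_neg_mul_dist_add_exp_neg_mul_dist_le (a i) (b i) (x i) hs)
    _ = _ := by
        simp only [prod_mul_distrib, prod_const, card_univ, ← exp_sum, sum_add_distrib,
          sum_neg_distrib, ← sum_div, ← mul_sum, mul_pow]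
        rw [mul_left_comm, ← exp_add]
        ring_nf

theorem sign_vectors_near_point_general {ι : Type*} [Fintype ι] {X : ι → Type*}
    [∀ i, PseudoMetricSpace (X i)] (a b x : ∀ i, X i) (hab : ∃ i, dist (a i) (b i) ≠ 0)
    {t : ℝ} (ht : t ≤ 1) :
    (Nat.card {p : ∀ i, X i | (∀ i, p i = a i ∨ p i = b i) ∧
        ∑ i, dist (p i) (x i) ≤ t * ((∑ i, dist (a i) (b i)) / 2)} : ℝ) ≤
      2 ^ Fintype.card ι * exp (-((∑ i, dist (a i) (b i)) ^ 2 /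
        (∑ i, dist (a i) (b i) ^ 2) * (1 - t) ^ 2 / 2)) := by
  set D := ∑ i, dist (a i) (b i)
  set Q := ∑ i, dist (a i) (b i) ^ 2
  have hD_nonneg : 0 ≤ D := sum_nonneg fun i _ => dist_nonneg
  have hQ_pos : 0 < Q := by
    obtain ⟨i, hi⟩ := hab
    exact sum_pos' (fun i _ => sq_nonneg _) ⟨i, mem_univ i, by positivity⟩
  -- This `s` minimises the exponent `s t D / 2 - s D / 2 + s² Q / 8`.
  have hs : 0 ≤ 2 * (1 - t) * D / Q :=
    div_nonneg (mul_nonneg (mul_nonneg zero_le_two (sub_nonneg.mpr ht)) hD_nonneg) hQ_pos.le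
  refine (card_pi_pair_sum_dist_le a b x _ hs).trans_eq ?_
  congr 2
  field_simp
  ring

/-- For `t ∈ [0,1)` and any `x ∈ ℝⁿ` (`n ≥ 1`), the number of sign vectors
`p ∈ {-1,1}ⁿ` with `‖p - x‖₁ ≤ t·n` is at most `2ⁿ · exp(-n(1-t)²/2)`. -/
theorem sign_vectors_near_point (n : ℕ) (hn : 1 ≤ n) (t : ℝ) (ht0 : 0 ≤ t)
    (ht1 : t < 1) (x : Fin n → ℝ) :
    (Nat.card {p : Fin n → ℝ |
        (∀ i, p i = 1 ∨ p i = -1) ∧ ∑ i, |p i - x i| ≤ t * n} : ℝ)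
      ≤ 2 ^ n * Real.exp (-(n * (1 - t) ^ 2 / 2)) := by
  have hD : ∑ _i : Fin n, dist (1 : ℝ) (-1) = 2 * n := by norm_num [Real.dist_eq, mul_comm]
  have hQ : ∑ _i : Fin n, dist (1 : ℝ) (-1) ^ 2 = 4 * n := by norm_num [Real.dist_eq, mul_comm]
  have hratio : (2 * n : ℝ) ^ 2 / (4 * n) = n := by field_simp; norm_num
  have hbound := sign_vectors_near_point_general (fun _ : Fin n => (1 : ℝ)) (fun _ => -1) x
    ⟨⟨0, hn⟩, by norm_num [Real.dist_eq]⟩ ht1.le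
  rwa [hD, hQ, hratio, mul_div_cancel_left₀ _ two_ne_zero, Fintype.card_fin] at hbound
end

section
/- Let n ∈ ℕ, ε > 0, q ∈ ℕ, and let Q_1,…,Q_q ⊆ {1,…,n} and C ⊆ {1,…,n}. For S ⊆ {1,…,n} set M_S = (1·1^T − u_S·u_S^T)/2 ∈ ℝ^{n×n}. Suppose y ∈ ℝ^n satisfies y·u_{Q_j} = 0 for all j ∈ {1,…,q}, y·1 = 0, −1 ≤ y_i ≤ 1 for all i, and y·u_C ≥ ε·n. Then the matrix Z = −y·y^T ∈ ℝ^{n×n} satisfies: Z_{ij} ≥ −1 for all i,j; ⟨Z, M_{Q_j}⟩ = 0 for all j ∈ {1,…,q}; and ⟨Z, M_C⟩ ≥ ε²·n²/2. -/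
/-- The signed indicator vector `u_S ∈ ℝⁿ`: `(u_S)ᵢ = 1` if `i ∈ S` and `-1`
otherwise. -/
noncomputable def signVec (n : ℕ) (S : Finset (Fin n)) : Fin n → ℝ :=
  fun i => if i ∈ S then 1 else -1

/-!
By bilinearity of the matrix inner product and `⟨x yᵀ, u vᵀ⟩ = (x · u) (y · v)`,
`⟨-y yᵀ, (1 1ᵀ - u uᵀ) / 2⟩ = ((y · u)² - (y · 1)²) / 2`. When `y ⊥ 1` only `(y · u)² / 2` is left,
so the linear conditions on `y · u` turn into their squares.
-/

theorem sum_sum_mul_mul_mul_eq {ι κ R : Type*} [NonUnitalCommSemiring R]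
    (s : Finset ι) (t : Finset κ) (x u : ι → R) (y v : κ → R) :
    ∑ i ∈ s, ∑ j ∈ t, (x i * y j) * (u i * v j) =
      (∑ i ∈ s, x i * u i) * ∑ j ∈ t, y j * v j := by
  simp only [mul_mul_mul_comm, Finset.sum_mul_sum]

theorem sum_sum_neg_mul_mul_one_sub_div_two {ι K : Type*} [Field K] (s : Finset ι) (y u : ι → K) :
    ∑ i ∈ s, ∑ j ∈ s, (-(y i * y j)) * ((1 - u i * u j) / 2) =
      ((∑ i ∈ s, y i * u i) ^ 2 - (∑ i ∈ s, y i) ^ 2) / 2 :=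
  calc
    _ = (∑ i ∈ s, ∑ j ∈ s, ((y i * y j) * (u i * u j) - y i * y j)) / 2 := by
      simp only [Finset.sum_div]
      exact Finset.sum_congr rfl fun i _ => Finset.sum_congr rfl fun j _ => by ring
    _ = _ := by
      simp only [Finset.sum_sub_distrib, sum_sum_mul_mul_mul_eq, ← Finset.sum_mul_sum, ← sq]

theorem sum_sum_neg_mul_mul_one_sub_div_two_of_sum_eq_zero {ι K : Type*} [Field K]
    {s : Finset ι} {y : ι → K} (hy : ∑ i ∈ s, y i = 0) (u : ι → K) :
    ∑ i ∈ s, ∑ j ∈ s, (-(y i * y j)) * ((1 - u i * u j) / 2) = (∑ i ∈ s, y i * u i) ^ 2 / 2 := by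
  rw [sum_sum_neg_mul_mul_one_sub_div_two, hy, zero_pow two_ne_zero, sub_zero]

theorem neg_one_le_neg_mul_of_abs_le_one {R : Type*} [Ring R] [LinearOrder R] [IsOrderedRing R]
    {a b : R} (ha : |a| ≤ 1) (hb : |b| ≤ 1) : -1 ≤ -(a * b) :=
  neg_le_neg <| (le_abs_self _).trans <|
    (abs_mul a b).trans_le <| mul_le_one₀ ha (abs_nonneg b) hb

theorem lp2_to_matrix_lp_general {ι κ K : Type*} [Fintype ι] [Field K] [LinearOrder K]
    [IsStrictOrderedRing K] {c : K} (hc : 0 ≤ c) (u : κ → ι → K) (v y : ι → K)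
    (hyu : ∀ k, ∑ i, y i * u k i = 0) (hy1 : ∑ i, y i = 0)
    (hybd : ∀ i, -1 ≤ y i ∧ y i ≤ 1) (hyv : c ≤ ∑ i, y i * v i) :
    (∀ i j, -1 ≤ -(y i * y j)) ∧
    (∀ k, ∑ i, ∑ j, (-(y i * y j)) * ((1 - u k i * u k j) / 2) = 0) ∧
    c ^ 2 / 2 ≤ ∑ i, ∑ j, (-(y i * y j)) * ((1 - v i * v j) / 2) := by
  simp only [sum_sum_neg_mul_mul_one_sub_div_two_of_sum_eq_zero hy1]
  refine ⟨fun i j => ?_, fun k => ?_, ?_⟩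
  · exact neg_one_le_neg_mul_of_abs_le_one (abs_le.2 (hybd i)) (abs_le.2 (hybd j))
  · rw [hyu k, zero_pow two_ne_zero, zero_div]
  · gcongr

/-- If `y ∈ ℝⁿ` is feasible for LP2 (orthogonal to every `u_{Qⱼ}` and to `1`,
with entries in `[-1,1]`) and `y · u_C ≥ ε·n`, then `Z = -y·yᵀ` has all entries
`≥ -1`, is orthogonal to every `M_{Qⱼ} = (11ᵀ - u_{Qⱼ}u_{Qⱼ}ᵀ)/2` in the matrix
inner product, and satisfies `⟨Z, M_C⟩ ≥ ε²n²/2`. -/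
theorem lp2_to_matrix_lp (n : ℕ) (ε : ℝ) (hε : 0 < ε) (q : ℕ)
    (Q : Fin q → Finset (Fin n)) (C : Finset (Fin n)) (y : Fin n → ℝ)
    (hyQ : ∀ j : Fin q, ∑ i, y i * signVec n (Q j) i = 0)
    (hy1 : ∑ i, y i = 0)
    (hybd : ∀ i, -1 ≤ y i ∧ y i ≤ 1)
    (hyC : ε * n ≤ ∑ i, y i * signVec n C i) :
    (∀ i j : Fin n, -1 ≤ -(y i * y j)) ∧
    (∀ k : Fin q, ∑ i, ∑ j,
        (-(y i * y j)) * ((1 - signVec n (Q k) i * signVec n (Q k) j) / 2) = 0) ∧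
    ε ^ 2 * n ^ 2 / 2 ≤ ∑ i, ∑ j,
        (-(y i * y j)) * ((1 - signVec n C i * signVec n C j) / 2) := by
  rw [← mul_pow]
  exact lp2_to_matrix_lp_general (by positivity) (fun k => signVec n (Q k)) (signVec n C) y
    hyQ hy1 hybd hyC
end

section
/- For every ε ∈ (0,1) and every α with 0 < α < (1−ε)³/(108(1+ε)) there exists N ∈ ℕ such that for all n ≥ N, all q ≤ α·n, and all subsets Q_1,…,Q_q ⊆ {1,…,n}, there exist a subset C ⊆ {1,…,n} with n/2 − √(n·ln n) ≤ |C| ≤ n/2 + √(n·ln n) and a vector z ∈ ℝ^{C(n,2)} with every entry ≥ −1, such that z·v_{Q_j} = 0 for all j ∈ {1,…,q} and z·v_C ≥ ε²·n²/4. -/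
/-!
For a vector `w` of total sum zero, the perturbation `z_{ij} = -w_i w_j` pairs with a cut vector as
`z · v_S = -(∑_S w)(∑_{Sᶜ} w) = (∑_S w)²`. Hence `z` is orthogonal to every query as soon as `w`
sums to zero over each `Q_j`, and `z ≥ -1` as soon as `|w_i| ≤ 1`.

An extreme point `w` of the cube `[-1,1]^n` cut by these `q + 1` linear conditions has at most
`q + 1` coordinates other than `±1`, so `∑ w_i² ≥ n - q - 1`. Let `C` consist of the `⌊n/2⌋` largest
coordinates of `w` and let `θ ≤ 1` separate them from the others. Since `|w_i| ≤ 1` and `∑ w_i = 0`,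
`∑ w_i² = ∑ w_i (w_i - θ) ≤ ∑ |w_i - θ| = ∑_C (w_i - θ) - ∑_{Cᶜ} (w_i - θ)`, which equals
`2 ∑_C w + θ (n - 2|C|) ≤ 2 ∑_C w + 1`, and therefore `z · v_C ≥ ((n - q - 2) / 2)²`.
-/

open Filter Finset Module
open scoped Topology

section BasicSolutions

variable {ι V : Type*} [AddCommGroup V]

lemma exists_mem_ker_ne_zero_of_finrank_lt_card {K : Type*} [Finite ι] [Field K]
    [Module K V] [FiniteDimensional K V] (L : (ι → K) →ₗ[K] V) {F : Finset ι}
    (hF : finrank K V < #F) :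
    ∃ u : ι → K, L u = 0 ∧ u ≠ 0 ∧ ∀ i ∉ F, u i = 0 := by
  classical
  cases nonempty_fintype ι
  let restrict : (ι → K) →ₗ[K] ({i // i ∉ F} → K) := LinearMap.funLeft K K Subtype.val
  have hker : LinearMap.ker (L.prod restrict) ≠ ⊥ := by
    apply LinearMap.ker_ne_bot_of_finrank_lt
    have hcard : Fintype.card {i // i ∉ F} = Fintype.card ι - #F := by
      simp [Fintype.card_subtype_compl]
    have hle : #F ≤ Fintype.card ι := F.card_le_univ
    rw [finrank_prod, finrank_fintype_fun_eq_card, finrank_fintype_fun_eq_card, hcard]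
    omega
  obtain ⟨u, hu, hu0⟩ := Submodule.exists_mem_ne_zero_of_ne_bot hker
  obtain ⟨hLu, hres⟩ : L u = 0 ∧ restrict u = 0 := by simpa using hu
  exact ⟨u, hLu, hu0, fun i hi => congrFun hres ⟨i, hi⟩⟩

lemma eventually_add_smul_mem_Icc [Finite ι] {a b w u : ι → ℝ} (hw : w ∈ Set.Icc a b)
    (hu : ∀ i, w i ∉ Set.Ioo (a i) (b i) → u i = 0) :
    ∀ᶠ t : ℝ in 𝓝 0, w + t • u ∈ Set.Icc a b := by
  have hcoord : ∀ i, ∀ᶠ t : ℝ in 𝓝 0, w i + t * u i ∈ Set.Icc (a i) (b i) := by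
    intro i
    by_cases hi : w i ∈ Set.Ioo (a i) (b i)
    · have hcont : Continuous fun t : ℝ => w i + t * u i := by fun_prop
      exact (hcont.tendsto' 0 (w i) (by simp)).eventually (Icc_mem_nhds hi.1 hi.2)
    · exact Eventually.of_forall fun t => by simpa [hu i hi] using ⟨hw.1 i, hw.2 i⟩
  filter_upwards [eventually_all.2 hcoord] with t ht
  exact ⟨fun i => (ht i).1, fun i => (ht i).2⟩

variable [Fintype ι] [Module ℝ V] [FiniteDimensional ℝ V]

lemma card_mem_Ioo_le_finrank_of_mem_extremePoints {a b w : ι → ℝ} (L : (ι → ℝ) →ₗ[ℝ] V) {c : V}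
    (hw : w ∈ (Set.Icc a b ∩ L ⁻¹' {c}).extremePoints ℝ) :
    #{i | w i ∈ Set.Ioo (a i) (b i)} ≤ finrank ℝ V := by
  by_contra! hlt
  obtain ⟨u, hLu, hu0, hu⟩ := exists_mem_ker_ne_zero_of_finrank_lt_card L hlt
  have hsupp : ∀ i, w i ∉ Set.Ioo (a i) (b i) → u i = 0 := fun i hi => hu i (by simpa using hi)
  have hplus := eventually_add_smul_mem_Icc hw.1.1 hsupp
  have hminus := eventually_add_smul_mem_Icc (u := -u) hw.1.1 fun i hi => by simp [hsupp i hi]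
  obtain ⟨t, ⟨hp, hm⟩, ht⟩ :=
    (((hplus.and hminus).filter_mono nhdsWithin_le_nhds).and
      (self_mem_nhdsWithin (s := Set.Ioi (0 : ℝ)))).exists
  have hLw : L w = c := hw.1.2
  have hmid : w ∈ openSegment ℝ (w + t • u) (w + t • -u) :=
    ⟨1 / 2, 1 / 2, by norm_num, by norm_num, by norm_num, by module⟩
  have heq : w + t • u = w :=
    hw.2 ⟨hp, by simp [hLu, hLw]⟩ ⟨hm, by simp [hLu, hLw]⟩ hmid
  exact smul_ne_zero ht.ne' hu0 (by simpa using heq)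

lemma exists_mem_Icc_card_mem_Ioo_le_finrank {a b x : ι → ℝ} (L : (ι → ℝ) →ₗ[ℝ] V)
    (hx : x ∈ Set.Icc a b) :
    ∃ w ∈ Set.Icc a b, L w = L x ∧ #{i | w i ∈ Set.Ioo (a i) (b i)} ≤ finrank ℝ V := by
  have hfiber : L ⁻¹' {L x} = (· - x) ⁻¹' (LinearMap.ker L : Set (ι → ℝ)) := by
    ext w
    simp [sub_eq_zero]
  have hclosed : IsClosed (L ⁻¹' {L x}) := by
    rw [hfiber]
    exact (LinearMap.ker L).closed_of_finiteDimensional.preimage (continuous_sub_right x)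
  obtain ⟨w, hw⟩ := (isCompact_Icc.inter_right hclosed).extremePoints_nonempty ⟨x, hx, rfl⟩
  exact ⟨w, hw.1.1, hw.1.2, card_mem_Ioo_le_finrank_of_mem_extremePoints L hw⟩

end BasicSolutions

section Weights

variable {ι : Type*} [Fintype ι]

lemma exists_abs_le_one_forall_sum_eq_zero {κ : Type*} [Fintype κ] (S : κ → Finset ι) :
    ∃ w : ι → ℝ, (∀ i, |w i| ≤ 1) ∧ (∀ j, ∑ i ∈ S j, w i = 0) ∧
      (Fintype.card ι : ℝ) - Fintype.card κ ≤ ∑ i, w i ^ 2 := by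
  let L : (ι → ℝ) →ₗ[ℝ] (κ → ℝ) := LinearMap.pi fun j => ∑ i ∈ S j, LinearMap.proj i
  obtain ⟨w, ⟨hlo, hhi⟩, hLw, hcard⟩ :=
    exists_mem_Icc_card_mem_Ioo_le_finrank (a := -1) (b := 1) (x := 0) L (by simp)
  refine ⟨w, fun i => abs_le.2 ⟨hlo i, hhi i⟩, fun j => by simpa [L] using congrFun hLw j, ?_⟩
  have hsq : ∀ i, 1 - (if w i ∈ Set.Ioo (-1 : ℝ) 1 then 1 else 0 : ℝ) ≤ w i ^ 2 := by
    intro i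
    split_ifs with hi
    · simpa using sq_nonneg (w i)
    · have habs : 1 ≤ |w i| := by simpa [← abs_lt] using hi
      simpa using habs
  have hfrac : (#{i | w i ∈ Set.Ioo (-1 : ℝ) 1} : ℝ) ≤ Fintype.card κ := by
    rw [finrank_fintype_fun_eq_card] at hcard
    exact_mod_cast hcard
  calc (Fintype.card ι : ℝ) - Fintype.card κ
      ≤ Fintype.card ι - #{i | w i ∈ Set.Ioo (-1 : ℝ) 1} := by linarith
    _ = ∑ i, (1 - (if w i ∈ Set.Ioo (-1 : ℝ) 1 then 1 else 0 : ℝ)) := by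
        rw [sum_sub_distrib, sum_boole]
        simp
    _ ≤ ∑ i, w i ^ 2 := sum_le_sum fun i _ => hsq i

lemma exists_card_eq_and_threshold {R : Type*} [LinearOrder R] (w : ι → R) {b : R}
    (hb : ∀ i, w i ≤ b) {k : ℕ} (hk : k ≤ Fintype.card ι) :
    ∃ (C : Finset ι) (θ : R), #C = k ∧ θ ≤ b ∧ (∀ i ∈ C, θ ≤ w i) ∧ ∀ i ∉ C, w i ≤ θ := by
  classical
  induction k with
  | zero => exact ⟨∅, b, by simp, le_rfl, by simp, fun i _ => hb i⟩
  | succ k ih =>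
    obtain ⟨C, θ, hC, -, hin, hout⟩ := ih (by omega)
    have hne : Cᶜ.Nonempty := by
      rw [← card_pos, card_compl]
      omega
    obtain ⟨m, hm, hmax⟩ := exists_max_image Cᶜ w hne
    rw [mem_compl] at hm
    refine ⟨insert m C, w m, by rw [card_insert_of_notMem hm, hC], hb m, ?_, ?_⟩
    · exact forall_mem_insert _ _ _ |>.2 ⟨le_rfl, fun i hi => (hout m hm).trans (hin i hi)⟩
    · exact fun i hi => hmax i (mem_compl.2 fun hiC => hi (mem_insert_of_mem hiC))

lemma sum_sq_le_of_threshold {w : ι → ℝ} {C : Finset ι} {θ : ℝ} (hw : ∀ i, |w i| ≤ 1)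
    (hsum : ∑ i, w i = 0) (hin : ∀ i ∈ C, θ ≤ w i) (hout : ∀ i ∉ C, w i ≤ θ) :
    ∑ i, w i ^ 2 ≤ 2 * ∑ i ∈ C, w i + θ * (Fintype.card ι - 2 * #C) := by
  classical
  have hterm : ∀ i, w i * (w i - θ) ≤ 2 * (if i ∈ C then w i - θ else 0) - (w i - θ) := by
    intro i
    obtain ⟨hlo, hhi⟩ := abs_le.1 (hw i)
    split_ifs with hi
    · nlinarith [mul_nonneg (sub_nonneg.2 hhi) (sub_nonneg.2 (hin i hi))]
    · nlinarith [mul_nonneg (neg_le_iff_add_nonneg.1 hlo) (sub_nonneg.2 (hout i hi))]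
  calc ∑ i, w i ^ 2 = ∑ i, w i * (w i - θ) := by
        simp only [mul_sub, sum_sub_distrib, ← sum_mul, hsum, ← sq, zero_mul, sub_zero]
    _ ≤ ∑ i, (2 * (if i ∈ C then w i - θ else 0) - (w i - θ)) := sum_le_sum fun i _ => hterm i
    _ = 2 * ∑ i ∈ C, w i + θ * (Fintype.card ι - 2 * #C) := by
        simp only [sum_sub_distrib, ← mul_sum, sum_ite_mem, Finset.univ_inter, hsum, sum_const,
          nsmul_eq_mul, card_univ]
        ring

lemma exists_card_eq_half_sum_sq_le {w : ι → ℝ} (hw : ∀ i, |w i| ≤ 1) (hsum : ∑ i, w i = 0) :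
    ∃ C : Finset ι, #C = Fintype.card ι / 2 ∧ ∑ i, w i ^ 2 ≤ 2 * ∑ i ∈ C, w i + 1 := by
  obtain ⟨C, θ, hC, hθ, hin, hout⟩ :=
    exists_card_eq_and_threshold w (fun i => (abs_le.1 (hw i)).2) (Nat.div_le_self _ 2)
  refine ⟨C, hC, (sum_sq_le_of_threshold hw hsum hin hout).trans ?_⟩
  obtain heven | hodd : Fintype.card ι = 2 * #C ∨ Fintype.card ι = 2 * #C + 1 := by omega
  · simp [heven]
  · simpa [hodd] using hθ

end Weights

section Cuts

variable {n : ℕ}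

lemma sum_pairIdx_add_swap {M : Type*} [AddCommMonoid M] (f : Fin n × Fin n → M)
    (hf : ∀ i, f (i, i) = 0) :
    ∑ e : PairIdx n, (f e.1 + f e.1.swap) = ∑ p, f p := by
  have hsplit : ∀ p : Fin n × Fin n,
      f p = (if p.1 < p.2 then f p else 0) + (if p.2 < p.1 then f p else 0) := by
    rintro ⟨i, j⟩
    rcases lt_trichotomy i j with h | rfl | h
    · simp [h, h.not_gt]
    · simp [hf]
    · simp [h, h.not_gt]
  have hswap : ∑ p : Fin n × Fin n, (if p.2 < p.1 then f p else 0)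
      = ∑ p : Fin n × Fin n, if p.1 < p.2 then f p.swap else 0 :=
    Fintype.sum_equiv (Equiv.prodComm _ _) _ _ fun _ => rfl
  calc ∑ e : PairIdx n, (f e.1 + f e.1.swap)
      = ∑ p with p.1 < p.2, (f p + f p.swap) :=
        (sum_subtype _ (by simp) fun p => f p + f p.swap).symm
    _ = ∑ p : Fin n × Fin n, ((if p.1 < p.2 then f p else 0) + if p.2 < p.1 then f p else 0) := by
        rw [sum_add_distrib, sum_add_distrib, hswap, sum_filter, sum_filter]
    _ = ∑ p, f p := (Fintype.sum_congr _ _ hsplit).symm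

lemma sum_mul_mul_cutVec (w : Fin n → ℝ) (S : Finset (Fin n)) :
    ∑ e : PairIdx n, w e.1.1 * w e.1.2 * cutVec n S e = (∑ i ∈ S, w i) * ∑ i ∈ Sᶜ, w i := by
  let f : Fin n × Fin n → ℝ := fun p => if p.1 ∈ S ∧ p.2 ∈ Sᶜ then w p.1 * w p.2 else 0
  have hcut : ∀ e : PairIdx n, w e.1.1 * w e.1.2 * cutVec n S e = f e.1 + f e.1.swap := by
    rintro ⟨⟨i, j⟩, -⟩
    by_cases hi : i ∈ S <;> by_cases hj : j ∈ S <;> simp [f, cutVec, hi, hj, mul_comm]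
  calc ∑ e : PairIdx n, w e.1.1 * w e.1.2 * cutVec n S e
      = ∑ e : PairIdx n, (f e.1 + f e.1.swap) := Fintype.sum_congr _ _ hcut
    _ = ∑ p, f p := sum_pairIdx_add_swap f fun i => by simp [f]
    _ = ∑ p ∈ S ×ˢ Sᶜ, w p.1 * w p.2 := by
        rw [← sum_filter]
        congr 1
        ext p
        simp
    _ = (∑ i ∈ S, w i) * ∑ i ∈ Sᶜ, w i := by rw [sum_mul_sum, sum_product]

/-- The off-diagonal entries of the rank-one matrix `-w wᵀ`, as a perturbation of the edge weights
of the complete graph. -/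
def negRankOne (w : Fin n → ℝ) : PairIdx n → ℝ :=
  fun e => -(w e.1.1 * w e.1.2)

lemma neg_one_le_negRankOne {w : Fin n → ℝ} (hw : ∀ i, |w i| ≤ 1) (e : PairIdx n) :
    -1 ≤ negRankOne w e := by
  have habs : |w e.1.1 * w e.1.2| ≤ 1 := by
    rw [abs_mul]
    exact mul_le_one₀ (hw _) (abs_nonneg _) (hw _)
  exact neg_le_neg (abs_le.1 habs).2

lemma sum_negRankOne_mul_cutVec {w : Fin n → ℝ} (hw : ∑ i, w i = 0) (S : Finset (Fin n)) :
    ∑ e, negRankOne w e * cutVec n S e = (∑ i ∈ S, w i) ^ 2 := by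
  have hcompl : ∑ i ∈ Sᶜ, w i = -∑ i ∈ S, w i := by
    linarith [sum_add_sum_compl S w]
  simp only [negRankOne, neg_mul, sum_neg_distrib, sum_mul_mul_cutVec, hcompl]
  ring

theorem exists_card_eq_half_le_sum_mul_cutVec {κ : Type*} [Fintype κ] (Q : κ → Finset (Fin n))
    (hκ : Fintype.card κ + 2 ≤ n) :
    ∃ (C : Finset (Fin n)) (z : PairIdx n → ℝ), #C = n / 2 ∧ (∀ e, -1 ≤ z e) ∧
      (∀ j, ∑ e, z e * cutVec n (Q j) e = 0) ∧
      (((n : ℝ) - Fintype.card κ - 2) / 2) ^ 2 ≤ ∑ e, z e * cutVec n C e := by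
  obtain ⟨w, hw, hS, hsq⟩ :=
    exists_abs_le_one_forall_sum_eq_zero fun j : Option κ => j.elim Finset.univ Q
  have hsum : ∑ i, w i = 0 := hS none
  obtain ⟨C, hC, hCw⟩ := exists_card_eq_half_sum_sq_le hw hsum
  simp only [Fintype.card_fin, Fintype.card_option, Nat.cast_add, Nat.cast_one] at hC hsq
  have hκ' : (Fintype.card κ : ℝ) + 2 ≤ n := by exact_mod_cast hκ
  refine ⟨C, negRankOne w, hC, neg_one_le_negRankOne hw, fun j => ?_, ?_⟩
  · have hQ : ∑ i ∈ Q j, w i = 0 := hS (some j)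
    rw [sum_negRankOne_mul_cutVec hsum, hQ, zero_pow two_ne_zero]
  · rw [sum_negRankOne_mul_cutVec hsum]
    exact pow_le_pow_left₀ (by linarith) (by linarith) 2

end Cuts

lemma one_le_sqrt_mul_log {x : ℝ} (hx : Real.exp 1 ≤ x) : 1 ≤ √(x * Real.log x) := by
  have hx1 : 1 ≤ x := (Real.one_le_exp zero_le_one).trans hx
  have hlog : 1 ≤ Real.log x := (Real.le_log_iff_exp_le (by linarith)).2 hx
  exact Real.one_le_sqrt.2 (one_le_mul_of_one_le_of_one_le hx1 hlog)

lemma one_sub_pow_three_div_le {ε : ℝ} (hε : ε ∈ Set.Icc (0 : ℝ) 1) :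
    (1 - ε) ^ 3 / (108 * (1 + ε)) ≤ 1 - ε := by
  obtain ⟨hε0, hε1⟩ := hε
  have hpow : (1 - ε) ^ 3 ≤ 1 - ε :=
    pow_le_of_le_one (by linarith) (by linarith) three_ne_zero
  exact (div_le_self (pow_nonneg (by linarith) 3) (by linarith)).trans hpow

theorem lp1_high_value_general {ε α : ℝ} (hε : 0 ≤ ε) (hα : α < 1 - ε) :
    ∃ N : ℕ, ∀ n : ℕ, N ≤ n → ∀ q : ℕ, (q : ℝ) ≤ α * n →
      ∀ Q : Fin q → Finset (Fin n),
      ∃ (C : Finset (Fin n)) (z : PairIdx n → ℝ),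
        ((n : ℝ) / 2 - Real.sqrt (n * Real.log n) ≤ C.card) ∧
        ((C.card : ℝ) ≤ (n : ℝ) / 2 + Real.sqrt (n * Real.log n)) ∧
        (∀ e, -1 ≤ z e) ∧
        (∀ j : Fin q, ∑ e, z e * cutVec n (Q j) e = 0) ∧
        ε ^ 2 * n ^ 2 / 4 ≤ ∑ e, z e * cutVec n C e := by
  have hlarge : ∀ᶠ n : ℕ in atTop, Real.exp 1 ≤ n ∧ 2 ≤ (1 - ε - α) * n :=
    (tendsto_natCast_atTop_atTop.eventually_ge_atTop _).and
      ((tendsto_natCast_atTop_atTop.const_mul_atTop (by linarith)).eventually_ge_atTop 2)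
  obtain ⟨N, hN⟩ := eventually_atTop.1 hlarge
  refine ⟨N, fun n hn q hq Q => ?_⟩
  obtain ⟨hexp, hgap⟩ := hN n hn
  have hvalue : ε * n ≤ n - q - 2 := by linarith
  have hεn : 0 ≤ ε * n := by positivity
  have hqn : q + 2 ≤ n := by
    have : (q : ℝ) + 2 ≤ n := by linarith
    exact_mod_cast this
  obtain ⟨C, z, hC, hz, hQ, hCz⟩ :=
    exists_card_eq_half_le_sum_mul_cutVec Q (by simpa using hqn)
  have hsqrt := one_le_sqrt_mul_log hexp
  have hlo : (n : ℝ) ≤ 2 * #C + 1 := by exact_mod_cast (by omega : n ≤ 2 * #C + 1)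
  have hhi : 2 * (#C : ℝ) ≤ n := by exact_mod_cast (by omega : 2 * #C ≤ n)
  refine ⟨C, z, by linarith, by linarith, hz, hQ, ?_⟩
  calc ε ^ 2 * n ^ 2 / 4 = (ε * n / 2) ^ 2 := by ring
    _ ≤ (((n : ℝ) - q - 2) / 2) ^ 2 := by gcongr
    _ ≤ ∑ e, z e * cutVec n C e := by simpa using hCz

/-- For `ε ∈ (0,1)` and `0 < α < (1-ε)³/(108(1+ε))`, for all sufficiently
large `n`: for any `q ≤ α·n` queried cuts `Q₁, …, Q_q ⊆ {1,…,n}` there is a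
near-max cut `C` (`n/2 - √(n ln n) ≤ |C| ≤ n/2 + √(n ln n)`) and a
perturbation `z ∈ ℝ^{C(n,2)}` with all entries `≥ -1`, orthogonal to every
query indicator `v_{Qⱼ}`, satisfying `z · v_C ≥ ε²n²/4`. -/
theorem lp1_high_value (ε α : ℝ) (hε : ε ∈ Set.Ioo (0 : ℝ) 1) (hα0 : 0 < α)
    (hα : α < (1 - ε) ^ 3 / (108 * (1 + ε))) :
    ∃ N : ℕ, ∀ n : ℕ, N ≤ n → ∀ q : ℕ, (q : ℝ) ≤ α * n →
      ∀ Q : Fin q → Finset (Fin n),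
      ∃ (C : Finset (Fin n)) (z : PairIdx n → ℝ),
        ((n : ℝ) / 2 - Real.sqrt (n * Real.log n) ≤ C.card) ∧
        ((C.card : ℝ) ≤ (n : ℝ) / 2 + Real.sqrt (n * Real.log n)) ∧
        (∀ e, -1 ≤ z e) ∧
        (∀ j : Fin q, ∑ e, z e * cutVec n (Q j) e = 0) ∧
        ε ^ 2 * n ^ 2 / 4 ≤ ∑ e, z e * cutVec n C e :=
  lp1_high_value_general hε.1.le (hα.trans_le (one_sub_pow_three_div_le ⟨hε.1.le, hε.2.le⟩))
end

section
/- For every ε ∈ (0,1) and every α with 0 < α < (1−ε)³/(108(1+ε)) there exists N ∈ ℕ such that for all n ≥ N, all q ≤ α·n, and all subsets Q_1,…,Q_q ⊆ {1,…,n} the following holds: letting V = span(u_{Q_1},…,u_{Q_q}, 1) ⊆ ℝ^n, there exists C ⊆ {1,…,n} with n/2 − √(n·ln n) ≤ |C| ≤ n/2 + √(n·ln n) such that ‖u_C − v‖₁ > ε·n for every v ∈ V. -/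
open Finset
open scoped BigOperators

theorem finrank_span_range_union_singleton_le {K M ι : Type*} [DivisionRing K] [AddCommGroup M]
    [Module K M] [Fintype ι] (f : ι → M) (x : M) :
    Module.finrank K (Submodule.span K (Set.range f ∪ {x})) ≤ Fintype.card ι + 1 := by
  rw [Set.union_singleton, ← Option.range_elim, ← Fintype.card_option]
  exact finrank_range_le_card _

section Covering

open Metric MeasureTheory Module
open scoped NNReal

variable {E : Type*} [NormedAddCommGroup E] [NormedSpace ℝ E] [FiniteDimensional ℝ E]

theorem card_le_of_isSeparated_of_subset_closedBall {s : Finset E} {x : E} {R δ : ℝ≥0}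
    (hδ : δ ≠ 0) (hsep : IsSeparated δ (s : Set E)) (hs : (s : Set E) ⊆ closedBall x R) :
    (#s : ℝ) ≤ (1 + 2 * R / δ) ^ finrank ℝ E := by
  borelize E
  let μ : Measure E := Measure.addHaar
  have hδ0 : (0 : ℝ) < δ := NNReal.coe_pos.2 hδ.bot_lt
  have hball : 0 < μ.real (ball 0 1) :=
    ENNReal.toReal_pos (measure_ball_pos μ _ one_pos).ne' measure_ball_lt_top.ne
  have hdisj : (s : Set E).PairwiseDisjoint fun c => closedBall c (δ / 2 : ℝ) := by
    intro c hc d hd hcd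
    refine closedBall_disjoint_closedBall ?_
    have hlt : (δ : ENNReal) < edist c d := hsep hc hd hcd
    rw [edist_nndist, ENNReal.coe_lt_coe, ← NNReal.coe_lt_coe, coe_nndist] at hlt
    linarith
  have hsub : ⋃ c ∈ s, closedBall c (δ / 2 : ℝ) ⊆ closedBall x (R + δ / 2 : ℝ) :=
    Set.iUnion₂_subset fun c hc => closedBall_subset_closedBall' <| by
      linarith [mem_closedBall.1 (hs hc)]
  have hvol : #s * (δ / 2 : ℝ) ^ finrank ℝ E ≤ (R + δ / 2 : ℝ) ^ finrank ℝ E := by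
    refine le_of_mul_le_mul_right ?_ hball
    calc #s * (δ / 2 : ℝ) ^ finrank ℝ E * μ.real (ball 0 1)
        = μ.real (⋃ c ∈ s, closedBall c (δ / 2 : ℝ)) := by
          rw [measureReal_biUnion_finset hdisj (fun c _ => measurableSet_closedBall)
            fun c _ => measure_closedBall_lt_top.ne]
          simp [μ.addHaar_real_closedBall _ (half_pos hδ0).le, mul_assoc]
      _ ≤ μ.real (closedBall x (R + δ / 2 : ℝ)) :=
          measureReal_mono hsub measure_closedBall_lt_top.ne
      _ = (R + δ / 2 : ℝ) ^ finrank ℝ E * μ.real (ball 0 1) :=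
          μ.addHaar_real_closedBall x (by positivity)
  calc (#s : ℝ) ≤ (R + δ / 2 : ℝ) ^ finrank ℝ E / (δ / 2 : ℝ) ^ finrank ℝ E :=
        (le_div_iff₀ (by positivity)).2 hvol
    _ = (1 + 2 * R / δ) ^ finrank ℝ E := by rw [← div_pow]; congr 1; field_simp; ring

theorem exists_finset_isCover_closedBall (x : E) (R : ℝ≥0) {δ : ℝ≥0} (hδ : δ ≠ 0) :
    ∃ s : Finset E, (#s : ℝ) ≤ (1 + 2 * R / δ) ^ finrank ℝ E ∧ IsCover δ (closedBall x R) s := by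
  have hpacking : packingNumber δ (closedBall x (R : ℝ)) ≠ ⊤ := by
    obtain ⟨t, -, ht, hcover⟩ := exists_finite_isCover_of_isCompact (ε := δ / 2) (by simpa)
      (isCompact_closedBall x (R : ℝ))
    have hle := packingNumber_two_mul_le_externalCoveringNumber (δ / 2) (closedBall x (R : ℝ))
    rw [mul_div_cancel₀ _ two_ne_zero] at hle
    exact ((hle.trans hcover.externalCoveringNumber_le_encard).trans_lt ht.encard_lt_top).ne
  obtain ⟨s, hs⟩ : ∃ s : Finset E, (s : Set E) = maximalSeparatedSet δ (closedBall x R) :=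
    (Set.encard_lt_top_iff.1
      (encard_maximalSeparatedSet hpacking ▸ hpacking.lt_top)).exists_finset_coe
  refine ⟨s, card_le_of_isSeparated_of_subset_closedBall (x := x) hδ ?_ ?_, ?_⟩
  · exact hs ▸ isSeparated_maximalSeparatedSet
  · exact hs ▸ maximalSeparatedSet_subset
  · exact hs ▸ isCover_maximalSeparatedSet hpacking

theorem exists_finset_l1_cover {ι : Type*} [Fintype ι] (V : Submodule ℝ (ι → ℝ)) {R δ : ℝ}
    (hR : 0 ≤ R) (hδ : 0 < δ) :
    ∃ s : Finset (ι → ℝ), (#s : ℝ) ≤ (1 + 2 * R / δ) ^ finrank ℝ V ∧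
      ∀ v ∈ V, ∑ i, |v i| ≤ R → ∃ c ∈ s, ∑ i, |v i - c i| ≤ δ := by
  classical
  lift R to ℝ≥0 using hR
  lift δ to ℝ≥0 using hδ.le
  let e : (ι → ℝ) ≃ₗ[ℝ] PiLp 1 fun _ : ι => ℝ := (WithLp.linearEquiv 1 ℝ _).symm
  obtain ⟨s, hcard, hcover⟩ := exists_finset_isCover_closedBall
    (0 : V.map e.toLinearMap) R (NNReal.coe_pos.1 hδ).ne'
  rw [LinearEquiv.finrank_map_eq] at hcard
  refine ⟨s.image fun w => e.symm w.1, (Nat.cast_le.2 card_image_le).trans hcard,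
    fun v hv hvR => ?_⟩
  have hv' : ⟨e v, Submodule.mem_map_of_mem hv⟩ ∈ closedBall (0 : V.map e.toLinearMap) R := by
    rw [mem_closedBall_zero_iff, Submodule.coe_norm, PiLp.norm_eq_of_L1]
    exact hvR
  obtain ⟨c, hc, hvc⟩ := Set.mem_iUnion₂.1 (hcover.subset_iUnion_closedBall hv')
  refine ⟨e.symm c, mem_image_of_mem _ hc, ?_⟩
  rw [mem_closedBall, dist_eq_norm, Submodule.coe_norm, PiLp.norm_eq_of_L1] at hvc
  exact hvc

end Covering

section Density

open Real

variable {Ω : Type*} [Fintype Ω]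

theorem dens_le_exp_mul_expect_exp (X : Ω → ℝ) (a : ℝ) {l : ℝ} (hl : 0 ≤ l) :
    (dens {ω | a ≤ X ω} : ℝ) ≤ exp (-(l * a)) * 𝔼 ω, exp (l * X ω) := by
  rw [← expect_indicator_one, mul_expect]
  refine expect_le_expect fun ω _ => ?_
  by_cases hω : a ≤ X ω
  · have hexp : 0 ≤ -(l * a) + l * X ω := by linarith [mul_le_mul_of_nonneg_left hω hl]
    simpa [hω, ← exp_add] using hexp
  · simpa [hω] using by positivity

theorem exists_notMem_notMem_of_dens_add_dens_lt_one [Nonempty Ω] {s t : Finset Ω}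
    (h : (s.dens : ℝ) + t.dens < 1) : ∃ ω, ω ∉ s ∧ ω ∉ t := by
  classical
  by_contra! hcover
  have hunion : s ∪ t = univ := by ext ω; simpa [or_iff_not_imp_left] using hcover ω
  have hle := dens_union_le s t
  rw [hunion, dens_univ] at hle
  exact h.not_ge (by exact_mod_cast hle)

end Density

section SignVec

open Real

variable {n : ℕ}

theorem abs_signVec (S : Finset (Fin n)) (i : Fin n) : |signVec n S i| = 1 := by
  rw [signVec]; split_ifs <;> simp

theorem sum_signVec (S : Finset (Fin n)) : ∑ i, signVec n S i = 2 * (#S : ℝ) - n := by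
  have h (i) : signVec n S i = 2 * (if i ∈ S then 1 else 0) - 1 := by
    rw [signVec]; split_ifs <;> norm_num
  simp [h, mul_comm]

theorem expect_exp_sum_mul_signVec (t : Fin n → ℝ) :
    𝔼 S : Finset (Fin n), exp (∑ i, t i * signVec n S i) = ∏ i, cosh (t i) := by
  have hterm (S : Finset (Fin n)) : exp (∑ i, t i * signVec n S i) =
      (∏ i ∈ S, exp (t i)) * ∏ i ∈ Sᶜ, exp (-t i) := by
    rw [exp_sum, ← prod_mul_prod_compl S]
    congr 1 <;> refine prod_congr rfl fun i hi => ?_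
    · simp [signVec, hi]
    · simp [signVec, mem_compl.1 hi]
  simp only [Fintype.expect_eq_sum_div_card, hterm, ← Fintype.prod_add, cosh_eq, prod_div_distrib]
  simp

/-- Hoeffding's inequality; at `v = 0` the bound reads `1`, as Lean divides by zero. -/
theorem dens_le_sum_mul_signVec {t : Fin n → ℝ} {v a : ℝ} (ht : ∑ i, t i ^ 2 ≤ v) (ha : 0 ≤ a) :
    (dens {S : Finset (Fin n) | a ≤ ∑ i, t i * signVec n S i} : ℝ) ≤ exp (-(a ^ 2 / (2 * v))) := by
  obtain rfl | hv := ((sum_nonneg fun i _ => sq_nonneg (t i)).trans ht).eq_or_lt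
  · simp
  have hmgf : 𝔼 S : Finset (Fin n), exp (a / v * ∑ i, t i * signVec n S i) ≤
      exp ((a / v) ^ 2 * v / 2) := by
    calc 𝔼 S : Finset (Fin n), exp (a / v * ∑ i, t i * signVec n S i)
        = ∏ i, cosh (a / v * t i) := by
          simp only [mul_sum, ← mul_assoc, ← expect_exp_sum_mul_signVec]
      _ ≤ ∏ i, exp ((a / v * t i) ^ 2 / 2) :=
          prod_le_prod (fun i _ => (cosh_pos _).le) fun i _ => cosh_le_exp_half_sq _
      _ = exp ((a / v) ^ 2 * (∑ i, t i ^ 2) / 2) := by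
          simp only [← exp_sum, mul_pow, mul_sum, sum_div]
      _ ≤ exp ((a / v) ^ 2 * v / 2) := by gcongr
  calc (dens {S : Finset (Fin n) | a ≤ ∑ i, t i * signVec n S i} : ℝ)
      ≤ exp (-(a / v * a)) * exp ((a / v) ^ 2 * v / 2) :=
        (dens_le_exp_mul_expect_exp _ a (by positivity)).trans
          (mul_le_mul_of_nonneg_left hmgf (exp_pos _).le)
    _ = exp (-(a ^ 2 / (2 * v))) := by rw [← exp_add]; congr 1; field_simp; ring

theorem one_sub_max_min_mul_le_abs_sub {s : ℝ} (hs : |s| = 1) (x : ℝ) :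
    1 - max (-1) (min 1 x) * s ≤ |s - x| := by
  obtain rfl | rfl := eq_or_eq_neg_of_abs_eq hs <;> grind

theorem dens_l1_le {c : Fin n → ℝ} {r : ℝ} (hr : r ≤ n) :
    (dens {S : Finset (Fin n) | ∑ i, |signVec n S i - c i| ≤ r} : ℝ) ≤
      exp (-((n - r) ^ 2 / (2 * n))) := by
  let t (i : Fin n) : ℝ := max (-1) (min 1 (c i))
  have ht (i) : t i ^ 2 ≤ 1 := (sq_le_one_iff_abs_le_one _).2 (abs_le.2 (by simp [t]))
  have hsub : ({S | ∑ i, |signVec n S i - c i| ≤ r} : Finset (Finset (Fin n))) ⊆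
      ({S | n - r ≤ ∑ i, t i * signVec n S i} : Finset (Finset (Fin n))) := by
    refine monotone_filter_right _ fun S _ hS => ?_
    have hsum := sum_le_sum fun i (_ : i ∈ univ) =>
      one_sub_max_min_mul_le_abs_sub (abs_signVec S i) (c i)
    simp only [sum_sub_distrib, sum_const, card_univ, Fintype.card_fin, nsmul_one] at hsum
    linarith
  refine (NNRat.cast_le.2 (dens_le_dens hsub)).trans ?_
  exact dens_le_sum_mul_signVec ((sum_le_sum fun i _ => ht i).trans (by simp)) (by linarith)

theorem dens_lt_abs_card_sub_half_le {r : ℝ} (hr : 0 ≤ r) :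
    (dens {S : Finset (Fin n) | r < |(#S : ℝ) - n / 2|} : ℝ) ≤ 2 * exp (-(2 * r ^ 2 / n)) := by
  have htail {s : ℝ} (hs : s ^ 2 = 1) :
      (dens {S : Finset (Fin n) | 2 * r ≤ ∑ i, s * signVec n S i} : ℝ) ≤
        exp (-(2 * r ^ 2 / n)) := by
    refine (dens_le_sum_mul_signVec (v := n) (by simp [hs]) (by positivity)).trans_eq ?_
    congr 2; ring
  have hsub : ({S | r < |(#S : ℝ) - n / 2|} : Finset (Finset (Fin n))) ⊆
      ({S | 2 * r ≤ ∑ i, 1 * signVec n S i} : Finset (Finset (Fin n))) ∪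
        ({S | 2 * r ≤ ∑ i, -1 * signVec n S i} : Finset (Finset (Fin n))) := by
    intro S hS
    simp only [← mul_sum, sum_signVec, mem_union, mem_filter_univ, lt_abs] at hS ⊢
    exact hS.imp (fun h => by linarith) fun h => by linarith
  have hdens := NNRat.cast_le (K := ℝ) |>.2 ((dens_le_dens hsub).trans (dens_union_le _ _))
  rw [NNRat.cast_add] at hdens
  linarith [htail (s := 1) (by norm_num), htail (s := -1) (by norm_num)]

theorem dens_le_of_forall_exists_l1_le {V : Submodule ℝ (Fin n → ℝ)} {𝒞 : Finset (Finset (Fin n))}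
    {r δ : ℝ} (hr : 0 ≤ r) (hδ : 0 < δ) (hrδ : r + δ ≤ n)
    (h𝒞 : ∀ S ∈ 𝒞, ∃ v ∈ V, ∑ i, |signVec n S i - v i| ≤ r) :
    (𝒞.dens : ℝ) ≤ (1 + 2 * (n + r) / δ) ^ Module.finrank ℝ V *
      exp (-((n - (r + δ)) ^ 2 / (2 * n))) := by
  classical
  obtain ⟨N, hNcard, hN⟩ := exists_finset_l1_cover V (by positivity : (0 : ℝ) ≤ n + r) hδ
  have hcover : 𝒞 ⊆ N.biUnion fun c => {S | ∑ i, |signVec n S i - c i| ≤ r + δ} := by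
    intro S hS
    obtain ⟨v, hv, hSv⟩ := h𝒞 S hS
    have hvnorm : ∑ i, |v i| ≤ n + r := by
      calc ∑ i, |v i| ≤ ∑ i, (|signVec n S i| + |signVec n S i - v i|) :=
            sum_le_sum fun i _ => by
              linarith [abs_sub_abs_le_abs_sub (v i) (signVec n S i),
                abs_sub_comm (v i) (signVec n S i)]
        _ ≤ n + r := by simpa [sum_add_distrib, abs_signVec] using hSv
    obtain ⟨c, hc, hvc⟩ := hN v hv hvnorm
    refine mem_biUnion.2 ⟨c, hc, (mem_filter_univ _).2 ?_⟩
    calc ∑ i, |signVec n S i - c i| ≤ ∑ i, (|signVec n S i - v i| + |v i - c i|) :=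
          sum_le_sum fun i _ => abs_sub_le _ _ _
      _ ≤ r + δ := by rw [sum_add_distrib]; gcongr
  calc (𝒞.dens : ℝ)
      ≤ ∑ c ∈ N, (dens {S : Finset (Fin n) | ∑ i, |signVec n S i - c i| ≤ r + δ} : ℝ) := by
        exact_mod_cast (dens_le_dens hcover).trans dens_biUnion_le
    _ ≤ #N * exp (-((n - (r + δ)) ^ 2 / (2 * n))) := by
        rw [← nsmul_eq_mul]
        exact sum_le_card_nsmul _ _ _ fun c _ => dens_l1_le hrδ
    _ ≤ _ := by gcongr

theorem dens_le_exp_of_forall_exists_l1_le (hn : n ≠ 0) {ε : ℝ} (hε : ε ∈ Set.Ico (0 : ℝ) 1)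
    {V : Submodule ℝ (Fin n → ℝ)} {𝒞 : Finset (Finset (Fin n))}
    (h𝒞 : ∀ S ∈ 𝒞, ∃ v ∈ V, ∑ i, |signVec n S i - v i| ≤ ε * n) :
    (𝒞.dens : ℝ) ≤
      exp (6 * (1 + ε) / (1 - ε) * Module.finrank ℝ V - 2 / 9 * (1 - ε) ^ 2 * n) := by
  obtain ⟨hε0, hε1⟩ := hε
  have hn0 : (0 : ℝ) < n := by positivity
  have hδ : 0 < 1 - ε := by linarith
  have hbase : 1 + 2 * (n + ε * n) / ((1 - ε) / 3 * n) = 1 + 6 * (1 + ε) / (1 - ε) := by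
    field_simp
    ring
  have hexponent : (n - (ε * n + (1 - ε) / 3 * n)) ^ 2 / (2 * n) = 2 / 9 * (1 - ε) ^ 2 * n := by
    field_simp
    ring
  calc (𝒞.dens : ℝ)
      ≤ (1 + 6 * (1 + ε) / (1 - ε)) ^ Module.finrank ℝ V *
          exp (-(2 / 9 * (1 - ε) ^ 2 * n)) := by
        rw [← hbase, ← hexponent]
        exact dens_le_of_forall_exists_l1_le (mul_nonneg hε0 hn0.le)
          (mul_pos (div_pos hδ three_pos) hn0) (by nlinarith) h𝒞
    _ ≤ exp (6 * (1 + ε) / (1 - ε)) ^ Module.finrank ℝ V *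
          exp (-(2 / 9 * (1 - ε) ^ 2 * n)) := by
        gcongr
        linarith [add_one_le_exp (6 * (1 + ε) / (1 - ε))]
    _ = exp (6 * (1 + ε) / (1 - ε) * Module.finrank ℝ V - 2 / 9 * (1 - ε) ^ 2 * n) := by
        rw [← exp_nat_mul, ← exp_add]
        congr 1
        ring

theorem dens_sqrt_mul_log_lt_abs_card_sub_half_le (hn : n ≠ 0) :
    (dens {S : Finset (Fin n) | √(n * log n) < |(#S : ℝ) - n / 2|} : ℝ) ≤ 2 / n ^ 2 := by
  have hn0 : (0 : ℝ) < n := by positivity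
  have hexponent : 2 * (n * log n) / n = log ((n : ℝ) ^ 2) := by
    rw [log_pow]
    push_cast
    field_simp
  refine (dens_lt_abs_card_sub_half_le (sqrt_nonneg _)).trans_eq ?_
  rw [sq_sqrt (mul_nonneg hn0.le (log_natCast_nonneg n)), hexponent, exp_neg,
    exp_log (pow_pos hn0 2), div_eq_mul_inv]

end SignVec

section NearMax

open Real Filter Topology

theorem eventually_exp_add_two_div_sq_lt_one {ε α : ℝ} (hε : ε ∈ Set.Ico (0 : ℝ) 1)
    (hα : α < (1 - ε) ^ 3 / (27 * (1 + ε))) (b : ℝ) :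
    ∀ᶠ n : ℕ in atTop,
      exp (6 * (1 + ε) / (1 - ε) * (α * n + b) - 2 / 9 * (1 - ε) ^ 2 * n) +
        2 / (n : ℝ) ^ 2 < 1 := by
  obtain ⟨hε0, hε1⟩ := hε
  have hδ : 0 < 1 - ε := by linarith
  have hrate : 6 * (1 + ε) / (1 - ε) * α - 2 / 9 * (1 - ε) ^ 2 < 0 := by
    calc 6 * (1 + ε) / (1 - ε) * α - 2 / 9 * (1 - ε) ^ 2
        < 6 * (1 + ε) / (1 - ε) * ((1 - ε) ^ 3 / (27 * (1 + ε))) - 2 / 9 * (1 - ε) ^ 2 := by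
          exact sub_lt_sub_right (mul_lt_mul_of_pos_left hα (div_pos (by positivity) hδ)) _
      _ = 0 := by field_simp; ring
  have hexp : Tendsto (fun n : ℕ => exp (6 * (1 + ε) / (1 - ε) * (α * n + b) -
      2 / 9 * (1 - ε) ^ 2 * n)) atTop (𝓝 0) := by
    have hlin := tendsto_atBot_add_const_right atTop (6 * (1 + ε) / (1 - ε) * b)
      (tendsto_natCast_atTop_atTop.const_mul_atTop_of_neg hrate)
    exact (tendsto_exp_atBot.comp hlin).congr fun n => congrArg exp (by ring)
  have hsq : Tendsto (fun n : ℕ => 2 / (n : ℝ) ^ 2) atTop (𝓝 0) :=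
    ((tendsto_pow_atTop two_ne_zero).comp tendsto_natCast_atTop_atTop).const_div_atTop 2
  exact (hexp.add hsq).eventually_lt_const (by norm_num)

theorem nearmax_cut_far_from_span_general {ε α : ℝ} (hε : ε ∈ Set.Ico (0 : ℝ) 1)
    (hα : α < (1 - ε) ^ 3 / (27 * (1 + ε))) (b : ℝ) :
    ∃ N : ℕ, ∀ n : ℕ, N ≤ n → ∀ V : Submodule ℝ (Fin n → ℝ),
      (Module.finrank ℝ V : ℝ) ≤ α * n + b →
      ∃ C : Finset (Fin n),
        ((n : ℝ) / 2 - √(n * log n) ≤ #C) ∧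
        ((#C : ℝ) ≤ (n : ℝ) / 2 + √(n * log n)) ∧
        ∀ v ∈ V, ε * n < ∑ i, |signVec n C i - v i| := by
  classical
  obtain ⟨N, hN⟩ := eventually_atTop.1
    ((eventually_exp_add_two_div_sq_lt_one hε hα b).and (eventually_ne_atTop 0))
  refine ⟨N, fun n hn V hV => ?_⟩
  obtain ⟨hsmall, hn0⟩ := hN n hn
  have hδ : 0 < 1 - ε := sub_pos.2 hε.2
  have hclose : (dens {S : Finset (Fin n) | ∃ v ∈ V, ∑ i, |signVec n S i - v i| ≤ ε * n} : ℝ) ≤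
      exp (6 * (1 + ε) / (1 - ε) * (α * n + b) - 2 / 9 * (1 - ε) ^ 2 * n) := by
    refine (dens_le_exp_of_forall_exists_l1_le hn0 hε (V := V) (by simp)).trans ?_
    have hε0 := hε.1
    gcongr
  obtain ⟨C, hfar, hbalanced⟩ := exists_notMem_notMem_of_dens_add_dens_lt_one
    ((add_le_add hclose (dens_sqrt_mul_log_lt_abs_card_sub_half_le hn0)).trans_lt hsmall)
  simp only [mem_filter_univ, not_exists, not_and, not_le] at hfar
  rw [mem_filter_univ, not_lt, abs_le] at hbalanced
  exact ⟨C, by linarith, by linarith, hfar⟩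

end NearMax

/-- For `ε ∈ (0,1)` and `0 < α < (1-ε)³/(108(1+ε))`, for all sufficiently
large `n`: for any `q ≤ α·n` queried cuts `Q₁, …, Q_q ⊆ {1,…,n}`, letting
`V = span(u_{Q₁}, …, u_{Q_q}, 1) ⊆ ℝⁿ`, there is a near-max cut `C`
(`n/2 - √(n ln n) ≤ |C| ≤ n/2 + √(n ln n)`) with `‖u_C - v‖₁ > ε·n` for every
`v ∈ V`. -/
theorem nearmax_cut_far_from_span (ε α : ℝ) (hε : ε ∈ Set.Ioo (0 : ℝ) 1)
    (hα0 : 0 < α) (hα : α < (1 - ε) ^ 3 / (108 * (1 + ε))) :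
    ∃ N : ℕ, ∀ n : ℕ, N ≤ n → ∀ q : ℕ, (q : ℝ) ≤ α * n →
      ∀ Q : Fin q → Finset (Fin n),
      ∃ C : Finset (Fin n),
        ((n : ℝ) / 2 - Real.sqrt (n * Real.log n) ≤ C.card) ∧
        ((C.card : ℝ) ≤ (n : ℝ) / 2 + Real.sqrt (n * Real.log n)) ∧
        ∀ v ∈ Submodule.span ℝ
            (Set.range (fun j : Fin q => signVec n (Q j)) ∪ {fun _ => (1 : ℝ)}),
          ε * n < ∑ i, |signVec n C i - v i| := by
  obtain ⟨hε0, hε1⟩ := hε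
  have hδ : 0 < 1 - ε := sub_pos.2 hε1
  have hα' : α < (1 - ε) ^ 3 / (27 * (1 + ε)) := hα.trans_le <|
    div_le_div_of_nonneg_left (pow_pos hδ 3).le (by positivity) (by linarith)
  obtain ⟨N, hN⟩ := nearmax_cut_far_from_span_general ⟨hε0.le, hε1⟩ hα' 1
  refine ⟨N, fun n hn q hq Q => hN n hn _ ?_⟩
  have hdim := finrank_span_range_union_singleton_le (K := ℝ) (fun j => signVec n (Q j)) 1
  rw [Fintype.card_fin] at hdim
  calc _ ≤ ((q + 1 : ℕ) : ℝ) := Nat.cast_le.2 hdim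
    _ ≤ α * n + 1 := by push_cast; gcongr
end

section
/- Let w be a nonnegative weight function on K_n with cut function F, and let c ∈ (0,1). Then the number of subsets U ⊆ {1,…,n} with F(U) < c·max_{S ⊆ {1,…,n}} F(S) is at most 2^n/(2(1−c)); equivalently, a uniformly random subset U of {1,…,n} satisfies Pr[F(U) < c·max_S F(S)] ≤ 1/(2(1−c)). -/
/-- The cut function of the weight function `w` on `K_n`:
`F(S) = Σ_{i ∈ S, j ∉ S} w_{ij}`. -/
noncomputable def cutFun (n : ℕ) (w : PairIdx n → ℝ) (S : Finset (Fin n)) : ℝ :=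
  ∑ e, w e * (if (e.1.1 ∈ S ↔ e.1.2 ∈ S) then 0 else 1)

/-- The maximum cut value `max_{S ⊆ {1,…,n}} F(S)`. -/
noncomputable def maxCutValue (n : ℕ) (w : PairIdx n → ℝ) : ℝ :=
  Finset.univ.sup' Finset.univ_nonempty (cutFun n w)

section Markov

open Finset

variable {ι R : Type*} [CommRing R] [LinearOrder R] [IsStrictOrderedRing R]
  {s : Finset ι} {f : ι → R} {M : R}

lemma card_filter_lt_mul_sub_le_sum_sub (hfM : ∀ i ∈ s, f i ≤ M) (t : R) :
    (#{i ∈ s | f i < t} : R) * (M - t) ≤ ∑ i ∈ s, (M - f i) := by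
  rw [← nsmul_eq_mul]
  calc #{i ∈ s | f i < t} • (M - t)
      ≤ ∑ i ∈ s with f i < t, (M - f i) :=
        card_nsmul_le_sum _ _ _ fun i hi => sub_le_sub_left (mem_filter.mp hi).2.le M
    _ ≤ ∑ i ∈ s, (M - f i) :=
        sum_le_sum_of_subset_of_nonneg (filter_subset _ _) fun i hi _ =>
          sub_nonneg.mpr (hfM i hi)

lemma card_filter_lt_mul_mul_one_sub_le {p : R} (hp : p ≤ 1) (hf : ∀ i ∈ s, 0 ≤ f i)
    (hfM : ∀ i ∈ s, f i ≤ M) (hmean : #s * (p * M) ≤ ∑ i ∈ s, f i) (c : R) :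
    (#{i ∈ s | f i < c * M} : R) * (1 - c) ≤ #s * (1 - p) := by
  have hbound_nonneg : 0 ≤ (#s : R) * (1 - p) :=
    mul_nonneg (Nat.cast_nonneg _) (sub_nonneg.mpr hp)
  rcases eq_empty_or_nonempty {i ∈ s | f i < c * M} with hempty | ⟨i, hi⟩
  · simpa [hempty] using hbound_nonneg
  obtain ⟨his, hlt⟩ := mem_filter.mp hi
  have hM : 0 < M := by
    refine ((hf i his).trans (hfM i his)).lt_of_ne' fun hM => ?_
    exact (hf i his).not_gt (by simpa [hM] using hlt)
  refine le_of_mul_le_mul_right ?_ hM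
  calc (#{i ∈ s | f i < c * M} : R) * (1 - c) * M
      = #{i ∈ s | f i < c * M} * (M - c * M) := by ring
    _ ≤ ∑ i ∈ s, (M - f i) := card_filter_lt_mul_sub_le_sum_sub hfM _
    _ = #s * M - ∑ i ∈ s, f i := by simp [sum_sub_distrib]
    _ ≤ #s * M - #s * (p * M) := sub_le_sub_left hmean _
    _ = #s * (1 - p) * M := by ring

end Markov

section Separation

open Finset

lemma two_mul_card_filter_not_mem_iff_mem {V : Type*} [Fintype V] [DecidableEq V] {a b : V}
    (hab : a ≠ b) : 2 * #{S : Finset V | ¬(a ∈ S ↔ b ∈ S)} = 2 ^ Fintype.card V := by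
  have hflip : #{S : Finset V | (a ∈ S ↔ b ∈ S)} = #{S : Finset V | ¬(a ∈ S ↔ b ∈ S)} :=
    card_equiv (symmDiff_right_involutive ({a} : Finset V)).toPerm fun S => by
      simp [mem_symmDiff, hab.symm, not_iff]
  calc 2 * #{S : Finset V | ¬(a ∈ S ↔ b ∈ S)}
      = #{S : Finset V | (a ∈ S ↔ b ∈ S)} + #{S : Finset V | ¬(a ∈ S ↔ b ∈ S)} := by
        rw [hflip, two_mul]
    _ = 2 ^ Fintype.card V := by
        rw [card_filter_add_card_filter_not, card_univ, Fintype.card_finset]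

end Separation

section Cut

open Finset

variable {n : ℕ} (w : PairIdx n → ℝ)

lemma two_mul_sum_cutFun : 2 * ∑ S, cutFun n w S = 2 ^ n * ∑ e, w e := by
  have hcut (e : PairIdx n) :
      2 * ∑ S : Finset (Fin n), (if (e.1.1 ∈ S ↔ e.1.2 ∈ S) then (0 : ℝ) else 1) = 2 ^ n := by
    have hsets := two_mul_card_filter_not_mem_iff_mem e.2.ne
    rw [Fintype.card_fin] at hsets
    simp only [← ite_not (_ ↔ _), sum_boole]
    exact_mod_cast hsets
  calc 2 * ∑ S, cutFun n w S
      = ∑ e, w e * (2 * ∑ S : Finset (Fin n),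
          (if (e.1.1 ∈ S ↔ e.1.2 ∈ S) then (0 : ℝ) else 1)) := by
        simp only [cutFun, mul_left_comm _ (2 : ℝ), ← mul_sum]
        rw [sum_comm]
        simp only [mul_sum]
    _ = 2 ^ n * ∑ e, w e := by simp only [hcut, ← sum_mul, mul_comm]

variable {w}

lemma cutFun_nonneg (hw : ∀ e, 0 ≤ w e) (S : Finset (Fin n)) : 0 ≤ cutFun n w S :=
  sum_nonneg fun e _ => mul_nonneg (hw e) (by split_ifs <;> simp)

lemma cutFun_le_sum (hw : ∀ e, 0 ≤ w e) (S : Finset (Fin n)) : cutFun n w S ≤ ∑ e, w e :=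
  sum_le_sum fun e _ => mul_le_of_le_one_right (hw e) (by split_ifs <;> simp)

lemma maxCutValue_le_sum (hw : ∀ e, 0 ≤ w e) : maxCutValue n w ≤ ∑ e, w e :=
  sup'_le _ _ fun S _ => cutFun_le_sum hw S

end Cut

theorem random_cut_approx_count_general (n : ℕ) (w : PairIdx n → ℝ) (hw : ∀ e, 0 ≤ w e)
    (c : ℝ) (hc1 : c < 1) :
    (Nat.card {U : Finset (Fin n) | cutFun n w U < c * ∑ e, w e} : ℝ)
      ≤ 2 ^ n / (2 * (1 - c)) := by
  have hcard : ((Finset.univ : Finset (Finset (Fin n))).card : ℝ) = 2 ^ n := by simp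
  have hmean : (Finset.univ : Finset (Finset (Fin n))).card * (1 / 2 * ∑ e, w e)
      ≤ ∑ S, cutFun n w S := by
    rw [hcard]
    linarith [two_mul_sum_cutFun w]
  have hcount := card_filter_lt_mul_mul_one_sub_le (by norm_num)
    (fun S _ => cutFun_nonneg hw S) (fun S _ => cutFun_le_sum hw S) hmean c
  rw [hcard] at hcount
  rw [Nat.card_eq_card_toFinset, Set.toFinset_ofPred, le_div_iff₀ (by linarith)]
  linarith

/-- For a nonnegative weight function `w` on `K_n` and `c ∈ (0,1)`, the number
of subsets `U ⊆ {1,…,n}` whose cut value is less than `c` times the maximum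
cut value is at most `2ⁿ / (2(1-c))`; i.e. a uniformly random cut fails to be a
`c`-approximation with probability at most `1/(2(1-c))`. -/
theorem random_cut_approx_count (n : ℕ) (w : PairIdx n → ℝ) (hw : ∀ e, 0 ≤ w e)
    (c : ℝ) (hc0 : 0 < c) (hc1 : c < 1) :
    (Nat.card {U : Finset (Fin n) | cutFun n w U < c * maxCutValue n w} : ℝ)
      ≤ 2 ^ n / (2 * (1 - c)) := by
  have hsub : {U | cutFun n w U < c * maxCutValue n w} ⊆ {U | cutFun n w U < c * ∑ e, w e} :=
    fun _ hU => hU.trans_le (mul_le_mul_of_nonneg_left (maxCutValue_le_sum hw) hc0.le)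
  exact (Nat.cast_le.mpr (Nat.card_mono (Set.toFinite _) hsub)).trans
    (random_cut_approx_count_general n w hw c hc1)
end

section
/- Let c ∈ (0, 1/2) and n ≥ 2, and let q = ⌈4·ln n/(1−2c)²⌉. Then there exist subsets Q_1, …, Q_q ⊆ {1,…,n} such that for every pair of distinct i, j ∈ {1,…,n}, the number of indices k ∈ {1,…,q} for which exactly one of i, j lies in Q_k is at least c·q. -/
/-!
Draw the `q` cuts independently and uniformly. Toggling the membership of `i` in a cut changes
whether `{i, j}` crosses it, so a uniform cut is crossed with probability `1 / 2`. By Hoeffding's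
inequality, the probability that `{i, j}` crosses at most `c * q = (1 / 2 - (1 / 2 - c)) * q` of
the cuts is at most `exp (-2 * q * (1 / 2 - c) ^ 2) = exp (-q * (1 - 2 * c) ^ 2 / 2)`, which is at
most `1 / n ^ 2` by the choice of `q`. There are `n * (n - 1) < n ^ 2` ordered pairs, so by the
union bound some choice of cuts is good for all of them.
-/

open MeasureTheory ProbabilityTheory
open scoped Finset

section Hoeffding

lemma sum_indicator_one_eq_ncard {Ω ι : Type*} [Fintype ι] (A : ι → Set Ω) (ω : Ω) :
    ∑ k, (A k).indicator (fun _ ↦ (1 : ℝ)) ω = {k | ω ∈ A k}.ncard := by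
  classical
  simp [Set.indicator_apply, Set.ncard_eq_toFinset_card']

variable {Ω ι : Type*} [MeasurableSpace Ω] {μ : Measure Ω}

lemma hasSubgaussianMGF_measureReal_sub_indicator [IsProbabilityMeasure μ] {A : Set Ω}
    (hA : MeasurableSet A) :
    HasSubgaussianMGF (fun ω ↦ μ.real A - A.indicator (fun _ ↦ (1 : ℝ)) ω) (1 / 4) μ := by
  have hbound : ∀ ω, A.indicator (fun _ ↦ (1 : ℝ)) ω ∈ Set.Icc 0 1 := fun ω ↦
    ⟨Set.indicator_nonneg (fun _ _ ↦ zero_le_one) ω,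
      Set.indicator_le_self' (fun _ _ ↦ zero_le_one) ω⟩
  have hoeffding := (hasSubgaussianMGF_of_mem_Icc (μ := μ)
    (measurable_const.indicator hA).aemeasurable (.of_forall hbound)).neg
  rw [integral_indicator_const _ hA] at hoeffding
  convert! hoeffding using 1
  · ext ω
    simp
  · norm_num

lemma measureReal_ncard_le_le_exp [Fintype ι] {A : ι → Set Ω} (hA : ∀ k, MeasurableSet (A k))
    (hindep : iIndepSet A μ) {p t : ℝ} (hp : ∀ k, p ≤ μ.real (A k)) (ht : 0 ≤ t) :
    μ.real {ω | ({k | ω ∈ A k}.ncard : ℝ) ≤ (p - t) * Fintype.card ι}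
      ≤ Real.exp (-2 * Fintype.card ι * t ^ 2) := by
  have := hindep.isProbabilityMeasure
  let X (k : ι) (ω : Ω) : ℝ := μ.real (A k) - (A k).indicator (fun _ ↦ 1) ω
  have hX : iIndepFun X μ := hindep.iIndepFun_indicator.comp
    (fun k x ↦ μ.real (A k) - x) fun _ ↦ measurable_const.sub measurable_id
  have hsubset : {ω | ({k | ω ∈ A k}.ncard : ℝ) ≤ (p - t) * Fintype.card ι}
      ⊆ {ω | t * Fintype.card ι ≤ ∑ k, X k ω} := by
    intro ω hω
    have hmean : p * Fintype.card ι ≤ ∑ k, μ.real (A k) := by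
      simpa [mul_comm] using Finset.sum_le_sum fun k (_ : k ∈ Finset.univ) ↦ hp k
    simp only [Set.mem_ofPred_eq, X, Finset.sum_sub_distrib, sum_indicator_one_eq_ncard] at hω ⊢
    linarith
  calc _ ≤ μ.real {ω | t * Fintype.card ι ≤ ∑ k, X k ω} := measureReal_mono hsubset
    _ ≤ Real.exp (-(t * Fintype.card ι) ^ 2 / (2 * ∑ _k : ι, (1 / 4 : NNReal))) :=
      HasSubgaussianMGF.measure_sum_ge_le_of_iIndepFun hX
        (fun k _ ↦ hasSubgaussianMGF_measureReal_sub_indicator (hA k)) (by positivity)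
    _ = Real.exp (-2 * Fintype.card ι * t ^ 2) := by
      congr 1
      rcases eq_or_ne (Fintype.card ι : ℝ) 0 with hcard | hcard
      · simp [hcard]
      · simp only [Finset.sum_const, Finset.card_univ, nsmul_eq_mul]
        push_cast
        field_simp
        norm_num

end Hoeffding

lemma iIndepSet_preimage_eval {ι : Type*} [Fintype ι] {Ω : ι → Type*}
    [∀ k, MeasurableSpace (Ω k)] (μ : ∀ k, Measure (Ω k)) [∀ k, IsProbabilityMeasure (μ k)]
    {A : ∀ k, Set (Ω k)} (hA : ∀ k, MeasurableSet (A k)) :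
    iIndepSet (fun k ↦ Function.eval k ⁻¹' A k) (Measure.pi μ) := by
  have heval : iIndepFun (fun k (ω : ∀ k, Ω k) ↦ ω k) (Measure.pi μ) :=
    iIndepFun_pi (X := fun _ ↦ id) fun _ ↦ aemeasurable_id
  rw [iIndepSet_iff_meas_biInter fun k ↦ measurable_pi_apply k (hA k)]
  exact fun s ↦ heval.meas_biInter fun k _ ↦ ⟨A k, hA k, rfl⟩

lemma exists_forall_lt_ncard_mem {α β : Type*} (ι : Type*) [MeasurableSpace α] [Fintype ι]
    (μ : Measure α) [IsProbabilityMeasure μ] {E : Finset β} {A : β → Set α} {p t : ℝ}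
    (hA : ∀ b ∈ E, MeasurableSet (A b)) (hp : ∀ b ∈ E, p ≤ μ.real (A b)) (ht : 0 ≤ t)
    (hE : #E * Real.exp (-2 * Fintype.card ι * t ^ 2) < 1) :
    ∃ x : ι → α, ∀ b ∈ E, (p - t) * Fintype.card ι < {k | x k ∈ A b}.ncard := by
  let P : Measure (ι → α) := Measure.pi fun _ ↦ μ
  let bad (b : β) : Set (ι → α) := {x | ({k | x k ∈ A b}.ncard : ℝ) ≤ (p - t) * Fintype.card ι}
  have hbad : ∀ b ∈ E, P.real (bad b) ≤ Real.exp (-2 * Fintype.card ι * t ^ 2) := by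
    intro b hb
    have hmp (k : ι) : MeasurePreserving (Function.eval k) P μ := measurePreserving_eval _ k
    refine measureReal_ncard_le_le_exp (A := fun k ↦ Function.eval k ⁻¹' A b)
      (fun k ↦ (hmp k).measurable (hA b hb))
      (iIndepSet_preimage_eval (fun _ ↦ μ) fun _ ↦ hA b hb) (fun k ↦ ?_) ht
    rw [(hmp k).measureReal_preimage (hA b hb).nullMeasurableSet]
    exact hp b hb
  have hunion : P.real (⋃ b ∈ E, bad b) < 1 := calc
    _ ≤ ∑ b ∈ E, P.real (bad b) := measureReal_biUnion_finset_le E bad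
    _ ≤ #E * Real.exp (-2 * Fintype.card ι * t ^ 2) := by
      simpa using Finset.sum_le_sum hbad
    _ < 1 := hE
  obtain ⟨x, hx⟩ : ∃ x, x ∉ ⋃ b ∈ E, bad b := by
    rw [← Set.ne_univ_iff_exists_notMem]
    intro huniv
    simp [huniv] at hunion
  exact ⟨x, by simpa [bad] using hx⟩

lemma two_mul_ncard_of_preimage_eq_compl {α : Type*} [Finite α] {s : Set α} (e : Equiv.Perm α)
    (hs : e ⁻¹' s = sᶜ) : 2 * s.ncard = Nat.card α := by
  rw [← Set.ncard_add_ncard_compl s, ← hs, two_mul,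
    Set.ncard_preimage_of_injective_subset_range e.injective (by simp)]

lemma uniformOn_univ_real {α : Type*} [Finite α] [MeasurableSpace α] [MeasurableSingletonClass α]
    (s : Set α) : (uniformOn (Set.univ : Set α)).real s = s.ncard / Nat.card α := by
  have := Fintype.ofFinite α
  rw [measureReal_def, uniformOn_univ, Measure.count_apply_finite s s.toFinite]
  simp [Set.ncard_eq_toFinset_card s]

section Cuts

variable {V : Type*}

/-- The event, for a random cut of `V`, that the pair `{i, j}` crosses it. A cut is encoded as one
of its two sides, so complementary sets count as different cuts. -/
def crossingCuts (i j : V) : Set (Finset V) := {S | ¬(i ∈ S ↔ j ∈ S)}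

lemma preimage_symmDiff_singleton_crossingCuts [DecidableEq V] {i j : V} (hij : i ≠ j) :
    (symmDiff · {i}) ⁻¹' crossingCuts i j = (crossingCuts i j)ᶜ := by
  ext S
  simp only [crossingCuts, Set.mem_preimage, Set.mem_compl_iff, Set.mem_ofPred_eq,
    Finset.mem_symmDiff, Finset.mem_singleton, hij.symm]
  tauto

lemma uniformOn_univ_real_crossingCuts [Finite V] {i j : V} (hij : i ≠ j) :
    (uniformOn (Set.univ : Set (Finset V))).real (crossingCuts i j) = 1 / 2 := by
  classical
  have hcard : 2 * (crossingCuts i j).ncard = Nat.card (Finset V) :=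
    two_mul_ncard_of_preimage_eq_compl (symmDiff_left_involutive ({i} : Finset V)).toPerm
      (preimage_symmDiff_singleton_crossingCuts hij)
  have hpos : (Nat.card (Finset V) : ℝ) ≠ 0 := Nat.cast_ne_zero.2 Nat.card_pos.ne'
  rw [uniformOn_univ_real, div_eq_iff hpos, ← hcard]
  push_cast
  ring

end Cuts

lemma card_offDiag_mul_exp_neg_lt_one {α : Type*} {s : Finset α} {x : ℝ}
    (hx : 2 * Real.log #s ≤ x) : #s.offDiag * Real.exp (-x) < 1 := by
  rcases s.eq_empty_or_nonempty with rfl | hs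
  · simp
  have hcard : (0 : ℝ) < #s := by exact_mod_cast hs.card_pos
  rw [Real.exp_neg, ← div_eq_mul_inv, div_lt_one (Real.exp_pos x)]
  calc (#s.offDiag : ℝ) < #s ^ 2 := by
        rw [Finset.offDiag_card, Nat.cast_sub (Nat.le_mul_self _), Nat.cast_mul]
        linarith
    _ = Real.exp (2 * Real.log #s) := by rw [two_mul, Real.exp_add, Real.exp_log hcard, sq]
    _ ≤ Real.exp x := Real.exp_le_exp.2 hx

theorem pseudorandom_cuts_exist_general {V ι : Type*} [Fintype V] [Fintype ι] {c : ℝ}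
    (hc : c ≤ 1 / 2)
    (hcard : 4 * Real.log (Fintype.card V) ≤ Fintype.card ι * (1 - 2 * c) ^ 2) :
    ∃ Q : ι → Finset V, ∀ i j : V, i ≠ j →
      c * Fintype.card ι < {k | ¬(i ∈ Q k ↔ j ∈ Q k)}.ncard := by
  classical
  have hpairs : #(Finset.univ : Finset V).offDiag
      * Real.exp (-2 * Fintype.card ι * (1 / 2 - c) ^ 2) < 1 := by
    convert card_offDiag_mul_exp_neg_lt_one (s := (Finset.univ : Finset V))
      (x := Fintype.card ι * (1 - 2 * c) ^ 2 / 2) ?_ using 3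
    · ring
    · rw [Finset.card_univ]
      linarith
  obtain ⟨Q, hQ⟩ := exists_forall_lt_ncard_mem ι (uniformOn (Set.univ : Set (Finset V)))
    (A := fun p : V × V ↦ crossingCuts p.1 p.2) (fun _ _ ↦ (Set.toFinite _).measurableSet)
    (fun _ hp ↦ (uniformOn_univ_real_crossingCuts (Finset.mem_offDiag.1 hp).2.2).ge)
    (sub_nonneg.2 hc) hpairs
  refine ⟨Q, fun i j hij ↦ ?_⟩
  simpa [crossingCuts] using hQ (i, j) (by simpa using hij)

/-- For `c ∈ (0, 1/2)` and `n ≥ 2`, with `q = ⌈4 ln n / (1-2c)²⌉`, there exist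
cuts `Q₁, …, Q_q ⊆ {1,…,n}` such that every pair of distinct vertices `i, j`
crosses at least a `c` fraction of these cuts. -/
theorem pseudorandom_cuts_exist (c : ℝ) (hc0 : 0 < c) (hc1 : c < 1 / 2)
    (n : ℕ) (hn : 2 ≤ n) (q : ℕ)
    (hq : q = ⌈4 * Real.log n / (1 - 2 * c) ^ 2⌉₊) :
    ∃ Q : Fin q → Finset (Fin n), ∀ i j : Fin n, i ≠ j →
      c * q ≤ (Nat.card {k : Fin q | ¬(i ∈ Q k ↔ j ∈ Q k)} : ℝ) := by
  have hd : 0 < (1 - 2 * c) ^ 2 := pow_pos (by linarith) 2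
  have hcard : 4 * Real.log n ≤ q * (1 - 2 * c) ^ 2 :=
    (div_le_iff₀ hd).1 (hq ▸ Nat.le_ceil _)
  obtain ⟨Q, hQ⟩ := pseudorandom_cuts_exist_general (V := Fin n) (ι := Fin q) hc1.le
    (by simpa using hcard)
  exact ⟨Q, fun i j hij ↦ by
    simpa only [Fintype.card_fin, Nat.card_coe_set_eq] using (hQ i j hij).le⟩
end

section
/- Let c > 1/2 and ε > 0 with ε² < (2c−1)/(8c+36), let n ∈ ℕ, and let B ⊆ {1,…,n}. Then the number of subsets A ⊆ {1,…,n} with e(A,B) ≥ c·e(A) is at most 2^n · 4·exp(−ε²·n); equivalently, a uniformly random subset A of {1,…,n} satisfies Pr[e(A,B) ≥ c·e(A)] ≤ 4·exp(−ε²·n). -/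
/-!
A pair crosses the cut `A ∆ B` iff it crosses exactly one of the cuts `A` and `B`, hence
`2 e(A,B) = e(A) + e(B) - e(A ∆ B)`. Put `S(A) = |A| - |Aᶜ|`. Since `4 e(A) = n² - S(A)²` and
`4 e(B) ≤ n²`, the inequality `c e(A) ≤ e(A,B)` implies
`(2c - 1)(n² - S(A)²) ≤ S(A ∆ B)²`, so one of `S(A)²`, `S(A ∆ B)²` is at least `2ε²n²` as soon
as `4cε² ≤ 2c - 1`. For uniformly random `A`, the set `A ∆ B` is uniformly random too, and
Hoeffding's inequality bounds the probability of each alternative by `2 exp(-ε²n)`.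
-/

open Finset
open scoped symmDiff

section Cuts

variable {V : Type*} [Fintype V] [DecidableEq V]

/-- The number `e(A)` of edges of the complete bipartite graph between `A` and `Aᶜ`. -/
def cutSize (A : Finset V) : ℕ :=
  #A * #Aᶜ

/-- The number `e(A,B)` of unordered pairs of vertices that cross both the cut `A` and the
cut `B`. -/
def commonCutSize (A B : Finset V) : ℕ :=
  #(A ∩ B) * #(Aᶜ ∩ Bᶜ) + #(A ∩ Bᶜ) * #(Aᶜ ∩ B)

/-- The signed sum `S(A) = ∑ i, x i`, where `x i = 1` for `i ∈ A` and `x i = -1` for `i ∉ A`. It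
measures how far the cut `A` is from being balanced. -/
def imbalance (A : Finset V) : ℝ :=
  #A - #Aᶜ

lemma card_inter_add_card_inter_compl (A B : Finset V) : #(A ∩ B) + #(A ∩ Bᶜ) = #A := by
  rw [← sdiff_eq_inter_compl, card_inter_add_card_sdiff]

lemma card_symmDiff_eq_add (A B : Finset V) : #(A ∆ B) = #(A ∩ Bᶜ) + #(Aᶜ ∩ B) := by
  rw [symmDiff_def, sup_eq_union, card_union_of_disjoint disjoint_sdiff_sdiff,
    sdiff_eq_inter_compl, sdiff_eq_inter_compl, inter_comm B]

lemma card_compl_symmDiff (A B : Finset V) : #(A ∆ B)ᶜ = #(A ∩ B) + #(Aᶜ ∩ Bᶜ) := by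
  have hA := card_inter_add_card_inter_compl A B
  have hAc := card_inter_add_card_inter_compl Aᶜ B
  have hS := card_symmDiff_eq_add A B
  have := card_add_card_compl A
  have := card_add_card_compl (A ∆ B)
  lia

lemma two_mul_commonCutSize_add_cutSize_symmDiff (A B : Finset V) :
    2 * commonCutSize A B + cutSize (A ∆ B) = cutSize A + cutSize B := by
  have hB := card_inter_add_card_inter_compl B A
  have hBc := card_inter_add_card_inter_compl Bᶜ A
  rw [inter_comm B, inter_comm B] at hB
  rw [inter_comm Bᶜ, inter_comm Bᶜ] at hBc
  simp only [commonCutSize, cutSize, card_symmDiff_eq_add, card_compl_symmDiff,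
    ← card_inter_add_card_inter_compl A B, ← card_inter_add_card_inter_compl Aᶜ B, ← hB, ← hBc]
  ring

lemma cast_card_compl_eq_sub (A : Finset V) : (#Aᶜ : ℝ) = Fintype.card V - #A :=
  eq_sub_of_add_eq' (mod_cast card_add_card_compl A)

lemma four_mul_cutSize (A : Finset V) :
    4 * (cutSize A : ℝ) = Fintype.card V ^ 2 - imbalance A ^ 2 := by
  rw [cutSize, imbalance, Nat.cast_mul, cast_card_compl_eq_sub]
  ring

lemma mul_sub_sq_imbalance_le {c : ℝ} {A B : Finset V}
    (h : c * cutSize A ≤ commonCutSize A B) :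
    (2 * c - 1) * (Fintype.card V ^ 2 - imbalance A ^ 2) ≤ imbalance (A ∆ B) ^ 2 := by
  have hcut : (2 * commonCutSize A B + cutSize (A ∆ B) : ℝ) = cutSize A + cutSize B :=
    mod_cast two_mul_commonCutSize_add_cutSize_symmDiff A B
  have hA := four_mul_cutSize A
  have hB := four_mul_cutSize B
  have hAB := four_mul_cutSize (A ∆ B)
  rw [← hA]
  linarith [sq_nonneg (imbalance B)]

lemma le_sq_imbalance_or_le_sq_imbalance_symmDiff {c t : ℝ} {A B : Finset V} (hc : 1 / 2 ≤ c)
    (ht : 2 * c * t ^ 2 ≤ 2 * c - 1) (h : c * cutSize A ≤ commonCutSize A B) :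
    (t * Fintype.card V) ^ 2 ≤ imbalance A ^ 2 ∨
      (t * Fintype.card V) ^ 2 ≤ imbalance (A ∆ B) ^ 2 := by
  by_contra! hsmall
  obtain ⟨hA, hAB⟩ := hsmall
  have hcut := mul_sub_sq_imbalance_le h
  have hA' := mul_le_mul_of_nonneg_left hA.le (by linarith : 0 ≤ 2 * c - 1)
  have ht' := mul_le_mul_of_nonneg_right ht (sq_nonneg (Fintype.card V : ℝ))
  linarith

end Cuts

section Hoeffding

open Real

variable {V : Type*} [Fintype V] [DecidableEq V]

lemma sum_exp_mul_imbalance (t : ℝ) :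
    ∑ A : Finset V, exp (t * imbalance A) = (2 * cosh t) ^ Fintype.card V := by
  have hcosh : 2 * cosh t = exp t + exp (-t) := by
    rw [cosh_eq]
    ring
  rw [hcosh, ← Fintype.sum_pow_mul_eq_add_pow]
  refine sum_congr rfl fun A _ ↦ ?_
  rw [← card_compl, ← exp_nat_mul, ← exp_nat_mul, ← exp_add, imbalance]
  ring_nf

lemma sum_exp_abs_mul_imbalance_le (t : ℝ) :
    ∑ A : Finset V, exp |t * imbalance A| ≤
      2 ^ Fintype.card V * (2 * exp (t ^ 2 / 2 * Fintype.card V)) :=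
  calc ∑ A : Finset V, exp |t * imbalance A|
      ≤ ∑ A : Finset V, (exp (t * imbalance A) + exp (-t * imbalance A)) :=
        sum_le_sum fun A _ ↦ by simpa only [neg_mul] using exp_abs_le (t * imbalance A)
    _ = 2 * (2 * cosh t) ^ Fintype.card V := by
        rw [sum_add_distrib, sum_exp_mul_imbalance, sum_exp_mul_imbalance, cosh_neg, ← two_mul]
    _ ≤ 2 * (2 * exp (t ^ 2 / 2)) ^ Fintype.card V := by
        gcongr
        exact cosh_le_exp_half_sq t
    _ = 2 ^ Fintype.card V * (2 * exp (t ^ 2 / 2 * Fintype.card V)) := by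
        rw [mul_pow, ← exp_nat_mul, mul_comm (Fintype.card V : ℝ)]
        ring

lemma card_sq_le_sq_imbalance_le (t : ℝ) :
    (#{A : Finset V | (t * Fintype.card V) ^ 2 ≤ imbalance A ^ 2} : ℝ) ≤
      2 ^ Fintype.card V * (2 * exp (-(t ^ 2 / 2 * Fintype.card V))) := by
  have hlarge : ∀ A ∈ ({A | (t * Fintype.card V) ^ 2 ≤ imbalance A ^ 2} : Finset (Finset V)),
      exp (t ^ 2 * Fintype.card V) ≤ exp |t * imbalance A| := by
    intro A hA
    have habs : |t * Fintype.card V| ≤ |imbalance A| := sq_le_sq.mp (mem_filter_univ A |>.mp hA)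
    refine exp_le_exp.mpr ?_
    calc t ^ 2 * Fintype.card V = |t| * |t * Fintype.card V| := by
          rw [abs_mul, Nat.abs_cast, ← mul_assoc, abs_mul_abs_self, sq]
      _ ≤ |t| * |imbalance A| := by gcongr
      _ = |t * imbalance A| := (abs_mul _ _).symm
  have hmarkov := (card_nsmul_le_sum _ _ _ hlarge).trans
    (sum_le_univ_sum_of_nonneg fun A ↦ (exp_pos _).le)
  rw [nsmul_eq_mul] at hmarkov
  refine le_of_mul_le_mul_right ?_ (exp_pos (t ^ 2 * Fintype.card V))
  refine (hmarkov.trans (sum_exp_abs_mul_imbalance_le t)).trans_eq ?_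
  rw [mul_assoc, mul_assoc, ← exp_add]
  ring_nf

end Hoeffding

section SymmDiff

variable {V : Type*} [Fintype V] [DecidableEq V] {p q : Finset V → Prop}
  [DecidablePred p] [DecidablePred q]

lemma card_filter_symmDiff (B : Finset V) : #{A | p (A ∆ B)} = #{A | p A} :=
  card_equiv (symmDiff_left_involutive B).toPerm fun A ↦ by
    simp only [mem_filter_univ, Function.Involutive.coe_toPerm]

lemma card_filter_le_two_mul_of_imp_or_symmDiff {B : Finset V}
    (h : ∀ A, p A → q A ∨ q (A ∆ B)) : #{A | p A} ≤ 2 * #{A | q A} :=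
  calc #{A | p A} ≤ #{A | q A ∨ q (A ∆ B)} := card_le_card (monotone_filter_right _ fun A _ ↦ h A)
    _ ≤ #{A | q A} + #{A | q (A ∆ B)} := by
        rw [filter_or]
        exact card_union_le _ _
    _ = 2 * #{A | q A} := by rw [card_filter_symmDiff, two_mul]

end SymmDiff

theorem random_bipartite_concentration_general {V : Type*} [Fintype V] [DecidableEq V]
    {c ε : ℝ} (hc : 1 / 2 ≤ c) (hcε : 4 * c * ε ^ 2 ≤ 2 * c - 1) (B : Finset V) :
    (#{A : Finset V | c * cutSize A ≤ commonCutSize A B} : ℝ) ≤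
      2 ^ Fintype.card V * (4 * Real.exp (-(ε ^ 2 * Fintype.card V))) := by
  set t := √2 * ε
  have ht : t ^ 2 = 2 * ε ^ 2 := by rw [mul_pow, Real.sq_sqrt zero_le_two]
  have hct : 2 * c * t ^ 2 ≤ 2 * c - 1 := by
    rw [ht]
    linarith
  calc (#{A : Finset V | c * cutSize A ≤ commonCutSize A B} : ℝ)
      ≤ 2 * #{A : Finset V | (t * Fintype.card V) ^ 2 ≤ imbalance A ^ 2} :=
        mod_cast card_filter_le_two_mul_of_imp_or_symmDiff
          fun A ↦ le_sq_imbalance_or_le_sq_imbalance_symmDiff hc hct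
    _ ≤ 2 * (2 ^ Fintype.card V * (2 * Real.exp (-(t ^ 2 / 2 * Fintype.card V)))) := by
        gcongr
        exact card_sq_le_sq_imbalance_le t
    _ = 2 ^ Fintype.card V * (4 * Real.exp (-(ε ^ 2 * Fintype.card V))) := by
        rw [ht, mul_div_cancel_left₀ _ two_ne_zero]
        ring

/-- Concentration for random bipartitions: let `c > 1/2` and `ε > 0` with
`ε² < (2c-1)/(8c+36)`, and let `B ⊆ {1,…,n}`. Writing
`e(A) = |A|·(n-|A|)` and `e(A,B) = |A∩B|·|Aᶜ∩Bᶜ| + |A∩Bᶜ|·|Aᶜ∩B|`, the number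
of subsets `A ⊆ {1,…,n}` with `e(A,B) ≥ c·e(A)` is at most
`2ⁿ · 4·exp(-ε²·n)`. -/
theorem random_bipartite_concentration (c ε : ℝ) (hc : 1 / 2 < c) (hε : 0 < ε)
    (hε2 : ε ^ 2 < (2 * c - 1) / (8 * c + 36)) (n : ℕ) (B : Finset (Fin n)) :
    (Nat.card {A : Finset (Fin n) |
        c * ((A.card : ℝ) * ((n : ℝ) - A.card)) ≤
          ((A ∩ B).card : ℝ) * ((Aᶜ ∩ Bᶜ).card : ℝ)
            + ((A ∩ Bᶜ).card : ℝ) * ((Aᶜ ∩ B).card : ℝ)} : ℝ)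
      ≤ 2 ^ n * (4 * Real.exp (-(ε ^ 2 * n))) := by
  have hcε : 4 * c * ε ^ 2 ≤ 2 * c - 1 := by
    rw [lt_div_iff₀ (by linarith)] at hε2
    nlinarith [sq_nonneg ε]
  simpa [cutSize, commonCutSize, cast_card_compl_eq_sub, Fintype.card_subtype] using
    random_bipartite_concentration_general hc.le hcε B
end

section
/- Let w be a nonnegative weight function on K_n and let κ ≥ 0. If S and T are κ-strong subsets of {1,…,n} with S ∩ T ≠ ∅, then S ∪ T is κ-strong. -/
/-! A nontrivial cut `U` of `S ∪ T` must split `S` or `T`: otherwise each of them is either disjoint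
from `U` or contained in it, and a common point of `S` and `T` puts both on the same side, so `U` is
trivial. As the weights are nonnegative, the cut that `U` induces on the set it splits weighs at
most the whole cut. -/

/-- A set `S ⊆ {1,…,n}` is `κ`-strong for the (symmetric) weight function `w`
on `K_n` if every nontrivial cut of the induced subgraph on `S` has crossing
weight at least `κ`. -/
def IsStrongSet (n : ℕ) (w : Fin n → Fin n → ℝ) (κ : ℝ) (S : Finset (Fin n)) : Prop :=
  ∀ T : Finset (Fin n), T ⊆ S → T.Nonempty → T ≠ S →
    κ ≤ ∑ i ∈ T, ∑ j ∈ S \ T, w i j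

/-- An element `u` of a lattice splits `a` if `a` lies neither entirely outside `u` nor entirely
inside it; for finite sets, `u` then induces a nontrivial cut of `a`. -/
def Splits {α : Type*} [PartialOrder α] [OrderBot α] (u a : α) : Prop :=
  ¬Disjoint u a ∧ ¬a ≤ u

theorem splits_or_splits_of_lt_sup {α : Type*} [DistribLattice α] [OrderBot α] {a b u : α}
    (hab : ¬Disjoint a b) (hu : u ≠ ⊥) (hlt : u < a ⊔ b) : Splits u a ∨ Splits u b := by
  by_contra! ⟨hua, hub⟩
  have le_of_meets_a : ¬Disjoint u a → a ≤ u := fun h => by_contra fun h' => hua ⟨h, h'⟩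
  have le_of_meets_b : ¬Disjoint u b → b ≤ u := fun h => by_contra fun h' => hub ⟨h, h'⟩
  have a_le_iff_b_le : a ≤ u ↔ b ≤ u :=
    ⟨fun h => le_of_meets_b fun hd => hab (hd.mono_left h),
      fun h => le_of_meets_a fun hd => hab (hd.mono_left h).symm⟩
  have meets : ¬Disjoint u a ∨ ¬Disjoint u b := by
    by_contra! ⟨ha, hb⟩
    exact hu ((ha.sup_right hb).eq_bot_of_le hlt.le)
  have ha : a ≤ u := meets.elim le_of_meets_a (a_le_iff_b_le.2 ∘ le_of_meets_b)
  exact hlt.not_ge (sup_le ha (a_le_iff_b_le.1 ha))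

section WeightedDigraph

variable {V M : Type*} [AddCommMonoid M] [PartialOrder M] {w : V → V → M} {κ : M}

/-- The total weight of the ordered pairs from `A` to `B`, for a possibly asymmetric weight
function. -/
def crossingWeight (w : V → V → M) (A B : Finset V) : M :=
  ∑ i ∈ A, ∑ j ∈ B, w i j

theorem crossingWeight_mono [IsOrderedAddMonoid M] (hw : ∀ i j, 0 ≤ w i j) {A A' B B' : Finset V}
    (hA : A ⊆ A') (hB : B ⊆ B') : crossingWeight w A B ≤ crossingWeight w A' B' :=
  calc ∑ i ∈ A, ∑ j ∈ B, w i j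
      ≤ ∑ i ∈ A, ∑ j ∈ B', w i j :=
        Finset.sum_le_sum fun i _ => Finset.sum_le_sum_of_subset_of_nonneg hB fun j _ _ => hw i j
    _ ≤ ∑ i ∈ A', ∑ j ∈ B', w i j :=
        Finset.sum_le_sum_of_subset_of_nonneg hA fun i _ _ => Finset.sum_nonneg fun j _ => hw i j

variable [DecidableEq V]

/-- Strong sets for weights on an arbitrary vertex type with values in an ordered monoid, where a
cut is weighed from its chosen side `U` to the rest of `S`; `IsStrongSet` is the case of real
weights on `Fin n`. -/
def IsStrong (w : V → V → M) (κ : M) (S : Finset V) : Prop :=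
  ∀ U : Finset V, U ⊆ S → U.Nonempty → U ≠ S → κ ≤ crossingWeight w U (S \ U)

variable [IsOrderedAddMonoid M]

theorem IsStrong.le_crossingWeight_of_splits {A S U : Finset V} (hA : IsStrong w κ A)
    (hw : ∀ i j, 0 ≤ w i j) (hAS : A ⊆ S) (hU : Splits U A) :
    κ ≤ crossingWeight w U (S \ U) := by
  obtain ⟨hmeets, hnot_subset⟩ := hU
  calc κ ≤ crossingWeight w (U ∩ A) (A \ (U ∩ A)) :=
        hA (U ∩ A) Finset.inter_subset_right (Finset.not_disjoint_iff_nonempty_inter.1 hmeets)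
          fun h => hnot_subset (Finset.inter_eq_right.1 h)
    _ = crossingWeight w (U ∩ A) (A \ U) := by rw [Finset.sdiff_inter_self_right]
    _ ≤ crossingWeight w U (S \ U) :=
        crossingWeight_mono hw Finset.inter_subset_left (Finset.sdiff_subset_sdiff hAS subset_rfl)

theorem strong_sets_union_general (hw : ∀ i j, 0 ≤ w i j) {S T : Finset V} (hS : IsStrong w κ S)
    (hT : IsStrong w κ T) (hST : (S ∩ T).Nonempty) : IsStrong w κ (S ∪ T) := by
  intro U hU hne hneq
  have hsplit : Splits U S ∨ Splits U T :=
    splits_or_splits_of_lt_sup (Finset.not_disjoint_iff_nonempty_inter.2 hST) hne.ne_empty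
      (hU.lt_of_ne hneq)
  rcases hsplit with hUS | hUT
  · exact hS.le_crossingWeight_of_splits hw Finset.subset_union_left hUS
  · exact hT.le_crossingWeight_of_splits hw Finset.subset_union_right hUT

end WeightedDigraph

/-- If `S` and `T` are `κ`-strong sets with nonempty intersection, then
`S ∪ T` is `κ`-strong. -/
theorem strong_sets_union (n : ℕ) (w : Fin n → Fin n → ℝ)
    (hw : ∀ i j, 0 ≤ w i j) (hsymm : ∀ i j, w i j = w j i)
    (κ : ℝ) (hκ : 0 ≤ κ) (S T : Finset (Fin n))
    (hS : IsStrongSet n w κ S) (hT : IsStrongSet n w κ T)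
    (hST : (S ∩ T).Nonempty) : IsStrongSet n w κ (S ∪ T) :=
  strong_sets_union_general hw hS hT hST
end

section
/- Let n ≥ 3. Then the span in ℝ^{C(n,2)} of the set {a(T) : T a spanning tree of the complete graph on {1,…,n}} is all of ℝ^{C(n,2)}. -/
open Classical in
/-- The tree vector `a(T) ∈ ℝ^{C(n,2)}` of a graph `T` on `{1,…,n}`: the
coordinate at the pair `{i,j}` is `1` if `{i,j}` is an edge of `T`, else `0`. -/
noncomputable def treeVec (n : ℕ) (T : SimpleGraph (Fin n)) : PairIdx n → ℝ :=
  fun p => if T.Adj p.1.1 p.1.2 then 1 else 0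

/-!
Replacing the edge `cv` of a tree by `uv`, where `u` is a further neighbour of `c`, gives a tree
again, and this changes the tree vector by the difference of two basis vectors. Hence the basis
vectors of any two edges sharing a vertex agree modulo the span of the tree vectors. A star on `n`
vertices is the sum of its `n - 1` edges, which are all congruent, so it is congruent to `n - 1`
times any one of them; when `n - 1` is invertible, every basis vector lies in the span.
-/

open SimpleGraph

section Exchange

variable {V : Type*} {T : SimpleGraph V}

lemma preconnected_of_forall_adj_reachable {G H : SimpleGraph V} (hG : G.Preconnected)
    (h : ∀ x y, G.Adj x y → H.Reachable x y) : H.Preconnected := fun x y =>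
  (hG x y).elim fun p => by
    induction p with
    | nil => rfl
    | cons hxy _ ih => exact (h _ _ hxy).trans ih

lemma isTree_deleteEdges_sup_edge (hT : T.IsTree) {e : Sym2 V} {u w : V}
    (huw : ¬ (T.deleteEdges {e}).Reachable u w) : (T.deleteEdges {e} ⊔ edge u w).IsTree := by
  induction e with | h a b
  set T' := T.deleteEdges {s(a, b)} ⊔ edge u w with hT'
  have hne : u ≠ w := fun h => huw (h ▸ .rfl)
  have hacyc : T'.IsAcyclic := (hT.isAcyclic.anti (deleteEdges_le _)).sup_edge_of_not_reachable huw
  have hadj {x y : V} (hxy : T.Adj x y) : s(x, y) = s(a, b) ∨ T'.Adj x y :=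
    or_iff_not_imp_left.mpr fun h => .inl (deleteEdges_adj.mpr ⟨hxy, h⟩)
  -- Were `a` and `b` not connected in `T'`, the graph `T' + ab ⊇ T` would be acyclic; as `T` is a
  -- maximal acyclic graph, this forces `uw` to be the deleted edge `ab`.
  have hab : T'.Reachable a b := by
    by_contra hab
    have hle : T ≤ T' ⊔ edge a b := fun x y hxy =>
      (hadj hxy).elim (fun h => .inr ((adj_edge _ _).mpr ⟨h.symm, hxy.ne⟩)) .inl
    have hmax : T' ⊔ edge a b ≤ T :=
      (isTree_iff_maximal_isAcyclic.mp hT).2.le_of_ge (hacyc.sup_edge_of_not_reachable hab) hle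
    have huwT' : T'.Adj u w := by simp [hT', edge_adj, hne]
    have heq : s(u, w) = s(a, b) := by
      by_contra heq
      exact huw (Adj.reachable (deleteEdges_adj.mpr ⟨hmax (.inl huwT'), heq⟩))
    exact hab (Adj.reachable (by rwa [← mem_edgeSet, ← heq]))
  have hreach (x y : V) (hxy : T.Adj x y) : T'.Reachable x y := by
    obtain heq | hxy' := hadj hxy
    · rcases Sym2.eq_iff.mp heq with ⟨rfl, rfl⟩ | ⟨rfl, rfl⟩
      exacts [hab, hab.symm]
    · exact hxy'.reachable
  have := hT.connected.nonempty
  exact ⟨⟨preconnected_of_forall_adj_reachable hT.connected.preconnected hreach⟩, hacyc⟩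

lemma not_reachable_deleteEdges_of_adj (hT : T.IsAcyclic) {c u v : V} (hu : T.Adj c u)
    (hv : T.Adj c v) (huv : u ≠ v) : ¬ (T.deleteEdges {s(c, v)}).Reachable u v := fun h =>
  have hcu : (T.deleteEdges {s(c, v)}).Adj c u :=
    deleteEdges_adj.mpr ⟨hu, fun h => huv (Sym2.congr_right.mp h)⟩
  isAcyclic_iff_forall_adj_isBridge.mp hT hv (hcu.reachable.trans h)

end Exchange

section Vectors

lemma indicator_coe_eq_sum_single {α M : Type*} [DecidableEq α] [AddCommMonoid M] (s : Finset α)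
    (f : α → M) : (s : Set α).indicator f = ∑ a ∈ s, Pi.single a (f a) := by
  ext a
  simp [Finset.sum_apply, Finset.sum_pi_single, Set.indicator_apply]

lemma indicator_edgeSet_deleteEdges_sup_edge {R V : Type*} [AddGroupWithOne R] [DecidableEq V]
    {G : SimpleGraph V} {e : Sym2 V} {u w : V} (he : e ∈ G.edgeSet) (hne : u ≠ w)
    (huw : ¬ (G.deleteEdges {e}).Adj u w) :
    (G.deleteEdges {e} ⊔ edge u w).edgeSet.indicator (1 : Sym2 V → R) =
      G.edgeSet.indicator 1 - Pi.single e 1 + Pi.single s(u, w) 1 := by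
  have hdisj : Disjoint (G.edgeSet \ {e}) {s(u, w)} := by
    rwa [Set.disjoint_singleton_right, ← edgeSet_deleteEdges]
  rw [edgeSet_sup, edgeSet_deleteEdges, edgeSet_edge_of_ne hne,
    Set.indicator_union_of_disjoint hdisj, Set.indicator_sdiff (Set.singleton_subset_iff.mpr he),
    Set.indicator_singleton, Set.indicator_singleton]
  rfl

end Vectors

section TreeSpace

variable (R V : Type*) [Ring R]

/-- The span of the tree vectors of all trees on the vertex set `V`, with coefficients in `R`. Tree
vectors are indexed here by all of `Sym2 V`; their entries on the diagonal are `0`. -/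
def treeSpace : Submodule R (Sym2 V → R) :=
  Submodule.span R {f | ∃ T : SimpleGraph V, T.IsTree ∧ f = T.edgeSet.indicator 1}

variable {R V}

lemma indicator_edgeSet_mem_treeSpace {T : SimpleGraph V} (hT : T.IsTree) :
    T.edgeSet.indicator 1 ∈ treeSpace R V :=
  Submodule.subset_span ⟨T, hT, rfl⟩

lemma single_sub_single_mem_treeSpace [DecidableEq V] {c u v : V} (hu : u ≠ c) (hv : v ≠ c) :
    Pi.single s(c, u) 1 - Pi.single s(c, v) 1 ∈ treeSpace R V := by
  obtain rfl | huv := eq_or_ne u v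
  · simp
  have hT : (starGraph v).IsTree := isTree_starGraph v
  have hvc : (starGraph v).Adj v c := starGraph_center_adj hv
  have huc : ¬ ((starGraph v).deleteEdges {s(v, c)}).Reachable u c :=
    not_reachable_deleteEdges_of_adj hT.isAcyclic (starGraph_center_adj huv.symm) hvc hu
  have hsub : (Pi.single s(c, u) 1 - Pi.single s(c, v) 1 : Sym2 V → R) =
      ((starGraph v).deleteEdges {s(v, c)} ⊔ edge u c).edgeSet.indicator 1 -
        (starGraph v).edgeSet.indicator 1 := by
    rw [indicator_edgeSet_deleteEdges_sup_edge hvc hu (mt Adj.reachable huc),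
      Sym2.eq_swap (a := u), Sym2.eq_swap (a := v)]
    abel
  rw [hsub]
  exact sub_mem (indicator_edgeSet_mem_treeSpace (isTree_deleteEdges_sup_edge hT huc))
    (indicator_edgeSet_mem_treeSpace hT)

lemma single_mem_treeSpace [DecidableEq V] [Fintype V]
    (hR : IsUnit ((Fintype.card V : R) - 1)) {e : Sym2 V} (he : ¬ e.IsDiag) :
    Pi.single e 1 ∈ treeSpace R V := by
  induction e with | h c v
  have hT : (starGraph c).IsTree := isTree_starGraph c
  have hcard : (Fintype.card V : R) - 1 = ((starGraph c).edgeFinset.card : R) := by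
    rw [← hT.card_edgeFinset, Nat.cast_add_one, add_sub_cancel_right]
  have hstar : ((Fintype.card V : R) - 1) • Pi.single s(c, v) (1 : R) =
      (starGraph c).edgeSet.indicator 1 -
        ∑ f ∈ (starGraph c).edgeFinset, (Pi.single f 1 - Pi.single s(c, v) 1) := by
    rw [← coe_edgeFinset, indicator_coe_eq_sum_single, Finset.sum_sub_distrib, Finset.sum_const,
      hcard, Nat.cast_smul_eq_nsmul]
    simp
  rw [← Submodule.smul_mem_iff_of_isUnit _ hR, hstar]
  refine sub_mem (indicator_edgeSet_mem_treeSpace hT) (sum_mem fun f hf => ?_)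
  induction f with | h x y
  obtain ⟨hxy, rfl | rfl⟩ := starGraph_adj.mp (mem_edgeFinset.mp hf)
  · exact single_sub_single_mem_treeSpace hxy.symm (Ne.symm he)
  · rw [Sym2.eq_swap (a := x)]
    exact single_sub_single_mem_treeSpace hxy (Ne.symm he)

lemma map_funLeft_treeSpace {ι : Type*} (e : ι → Sym2 V) :
    (treeSpace R V).map (LinearMap.funLeft R R e) = Submodule.span R
      {f : ι → R | ∃ T : SimpleGraph V, T.IsTree ∧ f = (e ⁻¹' T.edgeSet).indicator 1} := by
  rw [treeSpace, Submodule.map_span]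
  congr 1
  ext f
  constructor
  · rintro ⟨_, ⟨T, hT, rfl⟩, rfl⟩
    exact ⟨T, hT, rfl⟩
  · rintro ⟨T, hT, rfl⟩
    exact ⟨_, ⟨T, hT, rfl⟩, rfl⟩

theorem maxTreeSpace_complete_general [Fintype V] {ι : Type*} {e : ι → Sym2 V}
    (he : Function.Injective e) (hdiag : ∀ i, ¬ (e i).IsDiag)
    (hR : IsUnit ((Fintype.card V : R) - 1)) :
    Submodule.span R
        {f : ι → R | ∃ T : SimpleGraph V, T.IsTree ∧ f = (e ⁻¹' T.edgeSet).indicator 1}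
      = ⊤ := by
  classical
  have := Fintype.ofInjective e he
  rw [← map_funLeft_treeSpace, eq_top_iff, ← (Pi.basisFun R ι).span_eq, Submodule.span_le]
  rintro _ ⟨i, rfl⟩
  refine ⟨Pi.single (e i) 1, single_mem_treeSpace hR (hdiag i), ?_⟩
  ext j
  simp [LinearMap.funLeft_apply, Pi.single_apply, he.eq_iff]

end TreeSpace

lemma injective_sym2Mk_of_lt {α : Type*} [Preorder α] :
    Function.Injective fun p : {p : α × α // p.1 < p.2} => s(p.1.1, p.1.2) := by
  rintro ⟨⟨a, b⟩, hab⟩ ⟨⟨c, d⟩, hcd⟩ h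
  rcases Sym2.eq_iff.mp h with ⟨rfl, rfl⟩ | ⟨rfl, rfl⟩
  · rfl
  · exact (lt_asymm hab hcd).elim

lemma treeVec_eq_indicator {n : ℕ} (T : SimpleGraph (Fin n)) :
    treeVec n T = ((fun p : PairIdx n => s(p.1.1, p.1.2)) ⁻¹' T.edgeSet).indicator 1 := by
  classical
  ext p
  simp [treeVec, Set.indicator_apply]

/-- For `n ≥ 3`, the span in `ℝ^{C(n,2)}` of the tree vectors of all spanning
trees of the complete graph on `{1,…,n}` is all of `ℝ^{C(n,2)}`. -/
theorem maxTreeSpace_complete (n : ℕ) (hn : 3 ≤ n) :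
    Submodule.span ℝ
        {v : PairIdx n → ℝ | ∃ T : SimpleGraph (Fin n), T.IsTree ∧ v = treeVec n T}
      = ⊤ := by
  have hunit : IsUnit ((Fintype.card (Fin n) : ℝ) - 1) := by
    rw [Fintype.card_fin, isUnit_iff_ne_zero, sub_ne_zero, Nat.cast_ne_one]
    omega
  simp only [treeVec_eq_indicator]
  exact maxTreeSpace_complete_general injective_sym2Mk_of_lt (fun p => p.2.ne) hunit
end
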